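/- Let B be a basic indecomposable artin algebra and Γ a sincere cycle-finite finite connected component of the cyclic quiver _cΓ_B. Then for every path I = X_0 → X_1 → ⋯ → X_{m-1} → X_m = P of nonzero nonisomorphisms in ind B from an indecomposable injective module I to an indecomposable projective module P, all the modules X_0, X_1, …, X_m belong to Γ. -/

import Mathlib

/-!
Common framework: finite length modules over a ring, the radical of the module
category, cycles of indecomposable modules, Auslander-Reiten quivers,
translation quivers notions, and classes of artin algebras.
Right `A`-modules are formalized as left `Aᵐᵒᵖ`-modules.
-/

universe u

/-- A bundled object of `mod R`: a finite length `R`-module. -/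
structure ModA (R : Type u) [Ring R] : Type (u + 1) where
  M : Type u
  [acg : AddCommGroup M]
  [mod : Module R M]
  finLen : IsFiniteLength R M

attribute [instance] ModA.acg ModA.mod

/-- A bundled (not necessarily finite length) `R`-module. -/
structure RawMod (R : Type u) [Ring R] : Type (u + 1) where
  M : Type u
  [acg : AddCommGroup M]
  [mod : Module R M]

attribute [instance] RawMod.acg RawMod.mod

/-- A module is indecomposable iff it is nonzero and its endomorphism ring has no
nontrivial idempotents. -/
def IsIndecMod (R : Type u) [Ring R] (M : Type u) [AddCommGroup M] [Module R M] : Prop :=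
  Nontrivial M ∧ ∀ f : Module.End R M, f * f = f → f = 0 ∨ f = 1

namespace ModA

variable {R : Type u} [Ring R]

/-- Indecomposability of an object of `mod R`. -/
def IsIndec (X : ModA R) : Prop := IsIndecMod R X.M

/-- Isomorphism of objects of `mod R`. -/
def Iso (X Y : ModA R) : Prop := Nonempty (X.M ≃ₗ[R] Y.M)

end ModA

/-- Membership in the radical `rad(X, Y)` of the category `mod R`: a map `f : X → Y`
belongs to the radical iff for every indecomposable `Z` and all `g : Z → X`, `h : Y → Z`
the composite `h ∘ f ∘ g` is not an isomorphism. -/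
def InRad {R : Type u} [Ring R] {X Y : ModA R} (f : X.M →ₗ[R] Y.M) : Prop :=
  ∀ Z : ModA R, Z.IsIndec → ∀ (g : Z.M →ₗ[R] X.M) (h : Y.M →ₗ[R] Z.M),
    ¬Function.Bijective (h.comp (f.comp g))

/-- The powers `rad^n` of the radical of `mod R`. -/
def radPow (R : Type u) [Ring R] : ℕ → ∀ X Y : ModA R, AddSubgroup (X.M →ₗ[R] Y.M)
  | 0, _, _ => ⊤
  | n + 1, X, Y => AddSubgroup.closure
      {f | ∃ (Z : ModA R) (g : X.M →ₗ[R] Z.M) (h : Z.M →ₗ[R] Y.M),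
        InRad g ∧ h ∈ radPow R n Z Y ∧ f = h.comp g}

/-- Membership in the infinite radical `rad^∞ = ⋂ₙ radⁿ` of `mod R`. -/
def InRadInf {R : Type u} [Ring R] {X Y : ModA R} (f : X.M →ₗ[R] Y.M) : Prop :=
  ∀ n : ℕ, f ∈ radPow R n X Y

/-- A cycle in `ind R`: a sequence of nonzero nonisomorphisms
`M₀ → M₁ → ⋯ → M_{r-1} → M_r = M₀` between indecomposable modules. -/
structure ModCycle (R : Type u) [Ring R] : Type (u + 1) where
  len : ℕ
  len_pos : 0 < len
  obj : Fin (len + 1) → ModA R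
  obj_indec : ∀ i, (obj i).IsIndec
  closed : obj (Fin.last len) = obj 0
  hom : ∀ i : Fin len, (obj i.castSucc).M →ₗ[R] (obj i.succ).M
  hom_ne_zero : ∀ i, hom i ≠ 0
  hom_not_iso : ∀ i, ¬Function.Bijective (hom i)

/-- A cycle is finite if none of its homomorphisms lies in the infinite radical. -/
def ModCycle.IsFiniteCycle {R : Type u} [Ring R] (c : ModCycle R) : Prop :=
  ∀ i, ¬InRadInf (c.hom i)

/-- The cycle passes through the module `M`. -/
def ModCycle.Passes {R : Type u} [Ring R] (c : ModCycle R) (M : ModA R) : Prop :=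
  ∃ i, (c.obj i).Iso M

/-- A module is cycle-finite if it lies on a cycle and every cycle through it is finite. -/
def IsCycleFiniteModule {R : Type u} [Ring R] (M : ModA R) : Prop :=
  (∃ c : ModCycle R, c.Passes M) ∧ ∀ c : ModCycle R, c.Passes M → c.IsFiniteCycle

/-- A module is directing if it lies on no cycle. -/
def IsDirectingModule {R : Type u} [Ring R] (M : ModA R) : Prop :=
  ¬∃ c : ModCycle R, c.Passes M

section Irreducible

variable {R : Type u} [Ring R]

/-- `f` is a split monomorphism (a section). -/
def SplitMonoMap {X Y : ModA R} (f : X.M →ₗ[R] Y.M) : Prop :=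
  ∃ r : Y.M →ₗ[R] X.M, r.comp f = LinearMap.id

/-- `f` is a split epimorphism (a retraction). -/
def SplitEpiMap {X Y : ModA R} (f : X.M →ₗ[R] Y.M) : Prop :=
  ∃ s : Y.M →ₗ[R] X.M, f.comp s = LinearMap.id

/-- `f` is an irreducible homomorphism. -/
def IsIrred {X Y : ModA R} (f : X.M →ₗ[R] Y.M) : Prop :=
  ¬SplitMonoMap f ∧ ¬SplitEpiMap f ∧
    ∀ (Z : ModA R) (g : X.M →ₗ[R] Z.M) (h : Z.M →ₗ[R] Y.M), h.comp g = f →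
      SplitMonoMap g ∨ SplitEpiMap h

end Irreducible

/-- An almost split (Auslander-Reiten) sequence `0 → l → m → r → 0` in `mod R`. -/
structure AlmostSplitSeq (R : Type u) [Ring R] : Type (u + 1) where
  l : ModA R
  m : ModA R
  r : ModA R
  f : l.M →ₗ[R] m.M
  g : m.M →ₗ[R] r.M
  inj : Function.Injective f
  surj : Function.Surjective g
  exact : LinearMap.range f = LinearMap.ker g
  not_split : ¬SplitEpiMap g
  l_indec : l.IsIndec
  r_indec : r.IsIndec
  right_almost : ∀ (Z : ModA R) (h : Z.M →ₗ[R] r.M), ¬SplitEpiMap h →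
      ∃ h' : Z.M →ₗ[R] m.M, g.comp h' = h
  left_almost : ∀ (Z : ModA R) (h : l.M →ₗ[R] Z.M), ¬SplitMonoMap h →
      ∃ h' : m.M →ₗ[R] Z.M, h'.comp f = h

/-- `N ≅ τ M` for the Auslander-Reiten translation `τ = DTr`. -/
def IsTauOf {R : Type u} [Ring R] (N M : ModA R) : Prop :=
  ∃ s : AlmostSplitSeq R, s.l.Iso N ∧ s.r.Iso M

/-- The indecomposable objects of `mod R`. -/
def IndecModA (R : Type u) [Ring R] := {X : ModA R // X.IsIndec}

/-- Isomorphism is an equivalence relation on indecomposable modules. -/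
def isoSetoid (R : Type u) [Ring R] : Setoid (IndecModA R) where
  r X Y := X.1.Iso Y.1
  iseqv :=
    { refl := fun X => ⟨LinearEquiv.refl R X.1.M⟩
      symm := fun h => h.elim fun e => ⟨e.symm⟩
      trans := fun h h' => h.elim fun e => h'.elim fun e' => ⟨e.trans e'⟩ }

/-- The vertices of the Auslander-Reiten quiver `Γ_R`: isomorphism classes of
indecomposable modules in `mod R`. -/
def ARVertex (R : Type u) [Ring R] := Quotient (isoSetoid R)

/-- The vertex of `Γ_R` given by an indecomposable module. -/
def ARVertex.mk {R : Type u} [Ring R] (X : IndecModA R) : ARVertex R :=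
  Quotient.mk (isoSetoid R) X

section ARQuiver

variable {R : Type u} [Ring R]

/-- The arrows of the Auslander-Reiten quiver: `x → y` iff there is an irreducible
homomorphism between representatives. -/
def ARArrow (x y : ARVertex R) : Prop :=
  ∃ (X Y : IndecModA R) (f : X.1.M →ₗ[R] Y.1.M),
    IsIrred f ∧ ARVertex.mk X = x ∧ ARVertex.mk Y = y

/-- `TauRel x y` iff `x = τ y` in the Auslander-Reiten quiver. -/
def TauRel (x y : ARVertex R) : Prop :=
  ∃ X Y : IndecModA R, ARVertex.mk X = x ∧ ARVertex.mk Y = y ∧ IsTauOf X.1 Y.1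

/-- A vertex given by an (indecomposable) projective module. -/
def IsProjVertex (x : ARVertex R) : Prop :=
  ∃ X : IndecModA R, ARVertex.mk X = x ∧ Module.Projective R X.1.M

/-- A vertex given by an (indecomposable) injective module. -/
def IsInjVertex (x : ARVertex R) : Prop :=
  ∃ X : IndecModA R, ARVertex.mk X = x ∧ Module.Injective R X.1.M

/-- The vertex lies on an oriented cycle of `Γ_R`. -/
def OnARCycle (x : ARVertex R) : Prop := Relation.TransGen ARArrow x x

/-- An edge (arrow in either direction) of the underlying graph of `Γ_R`. -/
def ARStep (x y : ARVertex R) : Prop := ARArrow x y ∨ ARArrow y x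

/-- `D` is a connected component of the full subquiver of `Γ_R` on the vertex set `S`. -/
def IsComponentOf (S D : Set (ARVertex R)) : Prop :=
  D ⊆ S ∧ D.Nonempty ∧
    (∀ x ∈ D, ∀ y ∈ S, ARStep x y → y ∈ D) ∧
    ∀ x ∈ D, ∀ y ∈ D, Relation.ReflTransGen (fun a b => a ∈ S ∧ b ∈ S ∧ ARStep a b) x y

/-- `C` is a connected component of `Γ_R`. -/
def IsARComponent (C : Set (ARVertex R)) : Prop := IsComponentOf Set.univ C

/-- The vertex lies on an oriented cycle all of whose vertices belong to `S`. -/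
def OnCycleIn (S : Set (ARVertex R)) (x : ARVertex R) : Prop :=
  Relation.TransGen (fun a b => a ∈ S ∧ b ∈ S ∧ ARArrow a b) x x

/-- `Γ` is a connected component of the cyclic quiver `_cΓ_R` (a cyclic component). -/
def IsCyclicComponent (Γ : Set (ARVertex R)) : Prop :=
  IsComponentOf {x | OnARCycle x} Γ

/-- A vertex represented by a cycle-finite module. -/
def IsCycleFiniteVertex (x : ARVertex R) : Prop :=
  ∃ X : IndecModA R, ARVertex.mk X = x ∧ IsCycleFiniteModule X.1

/-- A vertex represented by a directing module. -/
def IsDirectingVertex (x : ARVertex R) : Prop :=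
  ∃ X : IndecModA R, ARVertex.mk X = x ∧ IsDirectingModule X.1

/-- A cycle-finite cyclic component: a cyclic component containing a cycle-finite module. -/
def IsCycleFiniteCyclicComponent (Γ : Set (ARVertex R)) : Prop :=
  IsCyclicComponent Γ ∧ ∃ x ∈ Γ, IsCycleFiniteVertex x

/-- A full translation subquiver is cyclic if each of its vertices lies on an oriented
cycle inside it. -/
def IsCyclicSub (S : Set (ARVertex R)) : Prop := ∀ x ∈ S, OnCycleIn S x

/-- A full translation subquiver is coherent: every projective vertex is the start of an
infinite sectional path inside it, and every injective vertex is the end of an infinite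
sectional path inside it. -/
def IsCoherentSub (S : Set (ARVertex R)) : Prop :=
  (∀ x ∈ S, IsProjVertex x → ∃ c : ℕ → ARVertex R, c 0 = x ∧ (∀ n, c n ∈ S) ∧
      (∀ n, ARArrow (c n) (c (n + 1))) ∧ ∀ n, ¬TauRel (c n) (c (n + 2))) ∧
  (∀ x ∈ S, IsInjVertex x → ∃ c : ℕ → ARVertex R, c 0 = x ∧ (∀ n, c n ∈ S) ∧
      (∀ n, ARArrow (c (n + 1)) (c n)) ∧ ∀ n, ¬TauRel (c (n + 2)) (c n))

/-- `S` is a convex subquiver of (the full subquiver on) `C`: every path in `C` with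
source and target in `S` has all its vertices in `S`. -/
def ConvexIn (C S : Set (ARVertex R)) : Prop :=
  ∀ (n : ℕ) (c : ℕ → ARVertex R), (∀ k ≤ n, c k ∈ C) →
    (∀ k < n, ARArrow (c k) (c (k + 1))) → c 0 ∈ S → c n ∈ S → ∀ k ≤ n, c k ∈ S

/-- `S` is the core of the almost acyclic component `C`: the finite convex subquiver of
`C` containing all vertices lying on oriented cycles in `C`. -/
def IsCoreOf (C S : Set (ARVertex R)) : Prop :=
  S ⊆ C ∧ S.Finite ∧ ConvexIn C S ∧ ∀ x ∈ C, OnCycleIn C x → x ∈ S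

/-- A component is almost acyclic if all but finitely many of its vertices do not lie on
oriented cycles. -/
def IsAlmostAcyclicComp (C : Set (ARVertex R)) : Prop := {x ∈ C | OnCycleIn C x}.Finite

/-- A component is almost cyclic if its cyclic part is cofinite. -/
def IsAlmostCyclicComp (C : Set (ARVertex R)) : Prop := {x ∈ C | ¬OnCycleIn C x}.Finite

/-- Two vertices lie in the same `τ`-orbit. -/
def TauConn (x y : ARVertex R) : Prop :=
  Relation.ReflTransGen (fun a b => TauRel a b ∨ TauRel b a) x y

/-- The left stable part of `C`: remove the `τ`-orbits of projective vertices. -/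
def leftStable (C : Set (ARVertex R)) : Set (ARVertex R) :=
  {x | x ∈ C ∧ ¬∃ y, TauConn x y ∧ IsProjVertex y}

/-- The right stable part of `C`: remove the `τ`-orbits of injective vertices. -/
def rightStable (C : Set (ARVertex R)) : Set (ARVertex R) :=
  {x | x ∈ C ∧ ¬∃ y, TauConn x y ∧ IsInjVertex y}

/-- The stable part of `C`. -/
def stablePart (C : Set (ARVertex R)) : Set (ARVertex R) := leftStable C ∩ rightStable C

end ARQuiver

/-- The arrows of the translation quiver `ℤA∞/(τ^r)`, with vertices indexed by the
`τ`-orbit coordinate in `ZMod r` and the quasi-length (minus one) in `ℕ`. -/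
def TubeArrow {r : ℕ} : ZMod r × ℕ → ZMod r × ℕ → Prop := fun u v =>
  (v.1 = u.1 ∧ v.2 = u.2 + 1) ∨ (v.1 = u.1 + 1 ∧ u.2 = v.2 + 1)

section Tube

variable {R : Type u} [Ring R]

/-- `T` is a stable tube of rank `r`, parametrized by `φ : ℤA∞/(τ^r) → Γ_R`. -/
def IsStableTubeVia (T : Set (ARVertex R)) (r : ℕ) (φ : ZMod r × ℕ → ARVertex R) : Prop :=
  0 < r ∧ Function.Injective φ ∧ Set.range φ = T ∧
    (∀ u v, TubeArrow u v → ARArrow (φ u) (φ v)) ∧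
    (∀ u v, ARArrow (φ u) (φ v) → TubeArrow u v) ∧
    ∀ (i : ZMod r) (n : ℕ), TauRel (φ (i - 1, n)) (φ (i, n))

/-- `T` is a stable tube. -/
def IsStableTube (T : Set (ARVertex R)) : Prop := ∃ r φ, IsStableTubeVia T r φ

end Tube

section Separating

variable {R : Type u} [Ring R]

/-- A family of vertices is generalized standard if `rad^∞` vanishes between its modules. -/
def GeneralizedStandardSet (U : Set (ARVertex R)) : Prop :=
  ∀ X Y : IndecModA R, ARVertex.mk X ∈ U → ARVertex.mk Y ∈ U →
    ∀ f : X.1.M →ₗ[R] Y.1.M, InRadInf f → f = 0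

/-- `S` is (isomorphic to) a composition factor (a subquotient) of `M`. -/
def IsCompFactorMod (R : Type u) [Ring R] (S : Type u) [AddCommGroup S] [Module R S]
    (M : Type u) [AddCommGroup M] [Module R M] : Prop :=
  ∃ N' N : Submodule R M, N' ≤ N ∧
    Nonempty ((↥N ⧸ N'.comap N.subtype) ≃ₗ[R] S)

/-- A family of vertices is sincere if every simple module is a composition factor of one
of its modules. -/
def SincereSet (U : Set (ARVertex R)) : Prop :=
  ∀ (S : Type u) [AddCommGroup S] [Module R S], IsSimpleModule R S →
    ∃ x ∈ U, ∃ X : IndecModA R, ARVertex.mk X = x ∧ IsCompFactorMod R S X.1.M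

/-- All homomorphisms from modules with vertex in `U` to modules with vertex in `V` vanish. -/
def HomVanish (U V : Set (ARVertex R)) : Prop :=
  ∀ X Y : IndecModA R, ARVertex.mk X ∈ U → ARVertex.mk Y ∈ V →
    ∀ f : X.1.M →ₗ[R] Y.1.M, f = 0

/-- Every homomorphism from a module in `U` to a module in `V` factors through the
additive closure of the modules in `W`. -/
def FactorsThrough (U W V : Set (ARVertex R)) : Prop :=
  ∀ X Y : IndecModA R, ARVertex.mk X ∈ U → ARVertex.mk Y ∈ V →
    ∀ f : X.1.M →ₗ[R] Y.1.M, ∃ (k : ℕ) (Z : Fin k → IndecModA R)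
      (g : ∀ i, X.1.M →ₗ[R] (Z i).1.M) (h : ∀ i, (Z i).1.M →ₗ[R] Y.1.M),
      (∀ i, ARVertex.mk (Z i) ∈ W) ∧ f = ∑ i, (h i).comp (g i)

/-- `cs` is a separating family of components of `Γ_R`. -/
def IsSeparatingFamily (cs : Set (Set (ARVertex R))) : Prop :=
  ∃ ps qs : Set (Set (ARVertex R)),
    (∀ C ∈ ps, IsARComponent C) ∧ (∀ C ∈ cs, IsARComponent C) ∧ (∀ C ∈ qs, IsARComponent C) ∧
    (∀ C, IsARComponent C → C ∈ ps ∨ C ∈ cs ∨ C ∈ qs) ∧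
    (∀ C ∈ ps, C ∉ cs ∧ C ∉ qs) ∧ (∀ C ∈ cs, C ∉ qs) ∧
    SincereSet (⋃₀ cs) ∧ GeneralizedStandardSet (⋃₀ cs) ∧
    HomVanish (⋃₀ qs) (⋃₀ ps) ∧ HomVanish (⋃₀ qs) (⋃₀ cs) ∧ HomVanish (⋃₀ cs) (⋃₀ ps) ∧
    FactorsThrough (⋃₀ ps) (⋃₀ cs) (⋃₀ qs)

end Separating

/-! ### Classes of algebras via their Auslander-Reiten quivers.
For a ring `B`, the category `mod B` of finitely generated right `B`-modules is
realized as the category of finite length left `Bᵐᵒᵖ`-modules. -/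

/-- An algebra is of finite representation type if it has only finitely many isomorphism
classes of indecomposable finitely generated (right) modules. -/
def IsFiniteRepTypeAlg (B : Type u) [Ring B] : Prop :=
  (Set.univ : Set (ARVertex Bᵐᵒᵖ)).Finite

/-- An algebra is cycle-finite if all cycles in `ind B` are finite. -/
def IsCycleFiniteAlg (B : Type u) [Ring B] : Prop :=
  ∀ c : ModCycle Bᵐᵒᵖ, c.IsFiniteCycle

/-- A generalized multicoil algebra: an algebra whose Auslander-Reiten quiver admits a
separating family of almost cyclic coherent components. -/
def IsGeneralizedMulticoilAlgebra (B : Type u) [Ring B] : Prop :=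
  ∃ cs : Set (Set (ARVertex Bᵐᵒᵖ)),
    (∀ C ∈ cs, IsARComponent C ∧ IsAlmostCyclicComp C ∧ IsCoherentSub C) ∧
    IsSeparatingFamily cs

/-- A generalized double tilted algebra: an algebra whose Auslander-Reiten quiver admits
a separating almost acyclic component (a connecting component). -/
def IsGeneralizedDoubleTiltedAlgebra (B : Type u) [Ring B] : Prop :=
  ∃ C : Set (ARVertex Bᵐᵒᵖ),
    IsARComponent C ∧ IsAlmostAcyclicComp C ∧ IsSeparatingFamily {C}

/-- A concealed canonical algebra: an algebra whose Auslander-Reiten quiver admits a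
separating family of stable tubes. -/
def IsConcealedCanonicalAlgebra (B : Type u) [Ring B] : Prop :=
  ∃ ts : Set (Set (ARVertex Bᵐᵒᵖ)), (∀ T ∈ ts, IsStableTube T) ∧ IsSeparatingFamily ts

/-- A generic module: an indecomposable module of infinite length with finite endolength. -/
def IsGenericModule (R : Type u) [Ring R] (N : RawMod R) : Prop :=
  IsIndecMod R N.M ∧ ¬IsFiniteLength R N.M ∧ IsFiniteLength (Module.End R N.M) N.M

/-- The endolength of a module: its length over its endomorphism ring. -/
noncomputable def endolength (R : Type u) [Ring R] (N : RawMod R) : WithBot ℕ∞ :=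
  Order.krullDim (Submodule (Module.End R N.M) N.M)

/-- Generic tameness in the sense of Crawley-Boevey: for each `d` there are only finitely
many isomorphism classes of generic (right) modules of endolength `d`. -/
def IsGenericallyTameAlg (B : Type u) [Ring B] : Prop :=
  ∀ d : ℕ, ∃ (k : ℕ) (T : Fin k → RawMod Bᵐᵒᵖ),
    ∀ N : RawMod Bᵐᵒᵖ, IsGenericModule Bᵐᵒᵖ N → endolength Bᵐᵒᵖ N = (d : ℕ∞) →
      ∃ i, Nonempty (N.M ≃ₗ[Bᵐᵒᵖ] (T i).M)

/-- A tame generalized multicoil algebra. -/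
def IsTameGeneralizedMulticoilAlgebra (B : Type u) [Ring B] : Prop :=
  IsGeneralizedMulticoilAlgebra B ∧ IsGenericallyTameAlg B

/-- A tame generalized double tilted algebra. -/
def IsTameGeneralizedDoubleTiltedAlgebra (B : Type u) [Ring B] : Prop :=
  IsGeneralizedDoubleTiltedAlgebra B ∧ IsGenericallyTameAlg B

/-! ### The quiver of an algebra, convex idempotents, basic and connected algebras -/

section AlgebraSide

variable (A : Type u) [Ring A]

/-- The Jacobson radical of `A` (as a left ideal; it is in fact two-sided). -/
def jacobsonRad : Ideal A := (⊥ : Ideal A).jacobson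

/-- The square of the Jacobson radical of `A`. -/
def jacobsonRadSq : Ideal A :=
  Ideal.span {x | ∃ a ∈ jacobsonRad A, ∃ b ∈ jacobsonRad A, x = a * b}

/-- A primitive idempotent of `A`. -/
def IsPrimitiveIdempotent (e : A) : Prop :=
  IsIdempotentElem e ∧ e ≠ 0 ∧
    ∀ f g : A, IsIdempotentElem f → IsIdempotentElem g → f * g = 0 → g * f = 0 →
      e = f + g → f = 0 ∨ g = 0

/-- A complete family of pairwise orthogonal primitive idempotents of `A`; its indices
are the vertices of the quiver `Q_A` of `A`. -/
structure CompleteIdemFamily (A : Type u) [Ring A] where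
  n : ℕ
  e : Fin n → A
  prim : ∀ i, IsPrimitiveIdempotent A (e i)
  orth : ∀ i j, i ≠ j → e i * e j = 0
  total : ∑ i, e i = 1

/-- There is an arrow `i → j` in the quiver `Q_A` iff `e_i (rad A) e_j ⊄ (rad A)²`. -/
def QAarrow (E : CompleteIdemFamily A) (i j : Fin E.n) : Prop :=
  ∃ y ∈ jacobsonRad A, E.e i * y * E.e j ∉ jacobsonRadSq A

/-- A set of vertices of `Q_A` is convex if every path of `Q_A` with source and target in
it has all its vertices in it. -/
def ConvexVertexSet (E : CompleteIdemFamily A) (S : Set (Fin E.n)) : Prop :=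
  ∀ (n : ℕ) (c : ℕ → Fin E.n), (∀ k < n, QAarrow A E (c k) (c (k + 1))) →
    c 0 ∈ S → c n ∈ S → ∀ k ≤ n, c k ∈ S

/-- A convex idempotent of `A`: a sum of pairwise orthogonal primitive idempotents
corresponding to the vertices of a convex subquiver of `Q_A`. -/
def IsConvexIdempotent (e : A) : Prop :=
  ∃ (E : CompleteIdemFamily A) (S : Finset (Fin E.n)),
    ConvexVertexSet A E ↑S ∧ e = ∑ i ∈ S, E.e i

/-- The corner `eAe` of `A` at an idempotent `e`, as a nonunital subring (it is a unital
ring with unit `e`). -/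
def cornerRing (e : A) : NonUnitalSubring A where
  carrier := {x | e * x = x ∧ x * e = x}
  zero_mem' := by simp
  add_mem' := by
    rintro a b ⟨ha1, ha2⟩ ⟨hb1, hb2⟩
    constructor
    · rw [mul_add, ha1, hb1]
    · rw [add_mul, ha2, hb2]
  neg_mem' := by
    rintro a ⟨ha1, ha2⟩
    constructor
    · rw [mul_neg, ha1]
    · rw [neg_mul, ha2]
  mul_mem' := by
    rintro a b ⟨ha1, ha2⟩ ⟨hb1, hb2⟩
    constructor
    · rw [← mul_assoc, ha1]
    · rw [mul_assoc, hb2]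

/-- An (indecomposable =) connected algebra: no nontrivial central idempotents. -/
def IsConnectedAlgebra : Prop :=
  Nontrivial A ∧ ∀ e : A, IsIdempotentElem e → e ∈ Set.center A → e = 0 ∨ e = 1

/-- A basic algebra: distinct orthogonal primitive idempotents have nonisomorphic
associated indecomposable projective right modules. -/
def IsBasicAlgebra : Prop :=
  ¬∃ e f : A, IsPrimitiveIdempotent A e ∧ IsPrimitiveIdempotent A f ∧
    e * f = 0 ∧ f * e = 0 ∧
    Nonempty ((Submodule.span Aᵐᵒᵖ {e} : Submodule Aᵐᵒᵖ A) ≃ₗ[Aᵐᵒᵖ]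
      (Submodule.span Aᵐᵒᵖ {f} : Submodule Aᵐᵒᵖ A))

end AlgebraSide

/-! ### Support algebras and faithful algebras of families of vertices -/

section Support

variable (A : Type u) [Ring A]

/-- The radical of a module: the intersection of its maximal submodules. -/
def modRadical (R : Type u) [Ring R] (M : Type u) [AddCommGroup M] [Module R M] :
    Submodule R M :=
  sInf {N | IsCoatom N}

/-- The intersection `ann_A(Γ)` of the annihilators of all right `A`-modules whose
vertices belong to `Γ`, as a two-sided ideal of `A`. -/
def annTwoSidedIdeal (Γ : Set (ARVertex Aᵐᵒᵖ)) : TwoSidedIdeal A :=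
  TwoSidedIdeal.mk'
    {a | ∀ x ∈ Γ, ∀ X : IndecModA Aᵐᵒᵖ, ARVertex.mk X = x →
      ∀ m : X.1.M, MulOpposite.op a • m = 0}
    (by intro x _ X _ m; simp)
    (by
      intro a b ha hb x hx X hX m
      have : MulOpposite.op (a + b) • m = MulOpposite.op a • m + MulOpposite.op b • m := by
        rw [← add_smul]; rfl
      rw [this, ha x hx X hX m, hb x hx X hX m, add_zero])
    (by
      intro a ha x hx X hX m
      have : MulOpposite.op (-a) • m = -(MulOpposite.op a • m) := by
        rw [← neg_smul]; rfl
      rw [this, ha x hx X hX m, neg_zero])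
    (by
      intro a b hb x hx X hX m
      have : MulOpposite.op (a * b) • m = MulOpposite.op b • (MulOpposite.op a • m) := by
        rw [← mul_smul]; rfl
      rw [this, hb x hx X hX _])
    (by
      intro a b ha x hx X hX m
      have : MulOpposite.op (a * b) • m = MulOpposite.op b • (MulOpposite.op a • m) := by
        rw [← mul_smul]; rfl
      rw [this, ha x hx X hX m, smul_zero])

/-- The faithful algebra `B(Γ) = A / ann_A(Γ)` of a family `Γ` of vertices of `Γ_A`. -/
abbrev faithfulAlg (Γ : Set (ARVertex Aᵐᵒᵖ)) : Type u :=
  (annTwoSidedIdeal A Γ).ringCon.Quotient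

/-- The canonical projection `A → B(Γ)`. -/
def faithfulProj (Γ : Set (ARVertex Aᵐᵒᵖ)) : A →+* faithfulAlg A Γ :=
  RingCon.mk' (annTwoSidedIdeal A Γ).ringCon

/-- The trace ideal `t_A(Γ)`: the two-sided ideal of `A` generated by the images of all
homomorphisms of right `A`-modules from `Q` to `A`. -/
def traceIdeal (Q : Submodule Aᵐᵒᵖ A) : TwoSidedIdeal A :=
  TwoSidedIdeal.span (⋃ f : ↥Q →ₗ[Aᵐᵒᵖ] A, Set.range f)

/-- A decomposition `A = P_Γ ⊕ Q_Γ` of `A` in `mod A` such that the simple summands of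
`P_Γ / rad P_Γ` are exactly the simple composition factors of the modules in `Γ`. -/
structure GammaDecomp (A : Type u) [Ring A] (Γ : Set (ARVertex Aᵐᵒᵖ)) where
  P : Submodule Aᵐᵒᵖ A
  Q : Submodule Aᵐᵒᵖ A
  compl : IsCompl P Q
  top_factors : ∀ (S : Type u) [AddCommGroup S] [Module Aᵐᵒᵖ S], IsSimpleModule Aᵐᵒᵖ S →
    (IsCompFactorMod Aᵐᵒᵖ S (↥P ⧸ modRadical Aᵐᵒᵖ ↥P) ↔
      ∃ x ∈ Γ, ∃ X : IndecModA Aᵐᵒᵖ, ARVertex.mk X = x ∧ IsCompFactorMod Aᵐᵒᵖ S X.1.M)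

end Support

/-- Restriction of scalars along a surjective ring homomorphism `π : A → B` identifies a
vertex `y` of `Γ_B` with a vertex `x` of `Γ_A`: representatives have the same underlying
group, with the `A`-action obtained from the `B`-action through `π`. -/
def VertexRestrictsTo {A B : Type u} [Ring A] [Ring B] (π : A →+* B)
    (y : ARVertex Bᵐᵒᵖ) (x : ARVertex Aᵐᵒᵖ) : Prop :=
  ∃ (N : IndecModA Bᵐᵒᵖ) (X : IndecModA Aᵐᵒᵖ), ARVertex.mk N = y ∧ ARVertex.mk X = x ∧
    ∃ e : X.1.M ≃+ N.1.M, ∀ (a : A) (m : X.1.M),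
      e (MulOpposite.op a • m) = MulOpposite.op (π a) • e m

/-! ### `K`-module structures on Hom-groups, lengths, and Ext -/

section KLength

variable (K B : Type u) [CommRing K] [Ring B] [Algebra K B]
variable (X N : Type u) [AddCommGroup X] [Module B X] [AddCommGroup N] [Module B N]

/-- The action of `K` on `B`-linear maps, through `algebraMap K B`. -/
def homKSMul (k : K) (f : X →ₗ[B] N) : X →ₗ[B] N where
  toFun x := algebraMap K B k • f x
  map_add' x y := by show algebraMap K B k • f (x + y) = _; rw [map_add, smul_add]
  map_smul' b x := by
    simp only [map_smul, RingHom.id_apply, smul_smul]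
    rw [Algebra.commutes]

/-- The `K`-module structure on the group of `B`-linear maps. -/
def homKModule : Module K (X →ₗ[B] N) where
  smul := homKSMul K B X N
  one_smul f := LinearMap.ext fun x => by
    show algebraMap K B 1 • f x = f x
    rw [map_one, one_smul]
  mul_smul k l f := LinearMap.ext fun x => by
    show algebraMap K B (k * l) • f x = algebraMap K B k • algebraMap K B l • f x
    rw [map_mul, mul_smul]
  smul_zero k := LinearMap.ext fun x => by
    show algebraMap K B k • (0 : X →ₗ[B] N) x = 0
    simp
  smul_add k f g := LinearMap.ext fun x => by
    show algebraMap K B k • (f + g) x = algebraMap K B k • f x + algebraMap K B k • g x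
    simp [smul_add]
  add_smul k l f := LinearMap.ext fun x => by
    show algebraMap K B (k + l) • f x = algebraMap K B k • f x + algebraMap K B l • f x
    rw [map_add, add_smul]
  zero_smul f := LinearMap.ext fun x => by
    show algebraMap K B 0 • f x = 0
    rw [map_zero, zero_smul]

/-- The length `|Hom_B(X, N)|` of the group of `B`-linear maps `X → N` as a `K`-module. -/
noncomputable def homKLength : WithBot ℕ∞ :=
  letI : Module K (X →ₗ[B] N) := homKModule K B X N
  Order.krullDim (Submodule K (X →ₗ[B] N))

/-- The canonical surjection from the free module on (the underlying set of) `X` to `X`. -/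
noncomputable def freeCover : (X →₀ B) →ₗ[B] X :=
  Finsupp.linearCombination B id

/-- The length `|Ext¹_B(X, N)|` of `Ext¹` as a `K`-module, computed as the cokernel of
`Hom_B(F, N) → Hom_B(Ω X, N)` for the canonical free cover `F → X` with kernel `Ω X`. -/
noncomputable def ext1KLength : WithBot ℕ∞ :=
  letI : Module K (↥(LinearMap.ker (freeCover B X)) →ₗ[B] N) :=
    homKModule K B (↥(LinearMap.ker (freeCover B X))) N
  let D : Submodule K (↥(LinearMap.ker (freeCover B X)) →ₗ[B] N) :=
    { carrier := {f | ∃ g : (X →₀ B) →ₗ[B] N,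
        f = g.comp (LinearMap.ker (freeCover B X)).subtype}
      add_mem' := by
        rintro f₁ f₂ ⟨g₁, rfl⟩ ⟨g₂, rfl⟩
        exact ⟨g₁ + g₂, rfl⟩
      zero_mem' := ⟨0, rfl⟩
      smul_mem' := by
        rintro k f ⟨g, rfl⟩
        exact ⟨homKSMul K B _ N k g, rfl⟩ }
  Order.krullDim (Submodule K ((↥(LinearMap.ker (freeCover B X)) →ₗ[B] N) ⧸ D))

end KLength

/-- Vanishing of `Ext¹_B(X, N)`: every short exact sequence `0 → N → E → X → 0` splits. -/
def Ext1IsZero (B : Type u) [Ring B] (X : Type u) [AddCommGroup X] [Module B X]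
    (N : Type u) [AddCommGroup N] [Module B N] : Prop :=
  ∀ (E : Type u) [AddCommGroup E] [Module B E], ∀ (f : N →ₗ[B] E) (g : E →ₗ[B] X),
    Function.Injective f → Function.Surjective g → LinearMap.range f = LinearMap.ker g →
    ∃ s : X →ₗ[B] E, g.comp s = LinearMap.id

/-- The syzygy `Ω X`: the kernel of the canonical free cover of `X`. -/
noncomputable def syzygyRaw (B : Type u) [Ring B] (X : RawMod B) : RawMod B :=
  ⟨↥(LinearMap.ker (freeCover B X.M))⟩

/-- Iterated syzygies. -/
noncomputable def syzygyIter (B : Type u) [Ring B] : ℕ → RawMod B → RawMod B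
  | 0, X => X
  | n + 1, X => syzygyRaw B (syzygyIter B n X)

/-- Vanishing of `Ext^r_B(X, N)` for `r ≥ 1`, via `Ext^r(X, N) ≅ Ext¹(Ω^{r-1} X, N)`. -/
noncomputable def ExtIsZero (B : Type u) [Ring B] (X N : RawMod B) (r : ℕ) : Prop :=
  Ext1IsZero B (syzygyIter B (r - 1) X).M N.M

/-- `[X] = [M]` in the Grothendieck group `K₀`: the modules `X` and `M` have the same
composition factors including multiplicities. -/
def SameCompFactors {B : Type u} [Ring B] (X M : ModA B) : Prop :=
  ∃ (n : ℕ) (s : Fin (n + 1) → Submodule B X.M) (t : Fin (n + 1) → Submodule B M.M)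
    (σ : Equiv.Perm (Fin n)),
    s 0 = ⊥ ∧ s (Fin.last n) = ⊤ ∧ t 0 = ⊥ ∧ t (Fin.last n) = ⊤ ∧
    (∀ i : Fin n, s i.castSucc ≤ s i.succ) ∧ (∀ i : Fin n, t i.castSucc ≤ t i.succ) ∧
    ∀ i : Fin n,
      IsSimpleModule B (↥(s i.succ) ⧸ (s i.castSucc).comap (s i.succ).subtype) ∧
      Nonempty ((↥(s i.succ) ⧸ (s i.castSucc).comap (s i.succ).subtype) ≃ₗ[B]
        (↥(t (σ i).succ) ⧸ (t (σ i).castSucc).comap (t (σ i).succ).subtype))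

/-- A torsion class in `mod B`: a class of modules closed under factor modules and
extensions. -/
def IsTorsionClass (B : Type u) [Ring B] (T : Set (ModA B)) : Prop :=
  (∀ M ∈ T, ∀ (N : ModA B) (g : M.M →ₗ[B] N.M), Function.Surjective g → N ∈ T) ∧
  ∀ (X E M : ModA B) (f : X.M →ₗ[B] E.M) (g : E.M →ₗ[B] M.M),
    Function.Injective f → Function.Surjective g → LinearMap.range f = LinearMap.ker g →
    X ∈ T → M ∈ T → E ∈ T

/-- A torsion class is functorially finite iff it is of the form `Fac(M)`. -/
def IsFunctoriallyFinite (B : Type u) [Ring B] (T : Set (ModA B)) : Prop :=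
  ∃ M : ModA B,
    T = {N | ∃ (k : ℕ) (g : (Fin k → M.M) →ₗ[B] N.M), Function.Surjective g}

/-- A module `M` is `τ`-rigid if `Hom(M, τM) = 0`. -/
def IsTauRigid {B : Type u} [Ring B] (M : ModA B) : Prop :=
  ∀ N : ModA B, IsTauOf N M → ∀ f : M.M →ₗ[B] N.M, f = 0

/-- A module `M` is rigid if `Ext¹(M, M) = 0`. -/
def IsRigid {B : Type u} [Ring B] (M : ModA B) : Prop := Ext1IsZero B M.M M.M

/-- `α(M) ≤ 2`: the middle term of any almost split sequence ending at `M` has at most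
two indecomposable direct summands. -/
def AlphaLe2 {B : Type u} [Ring B] (M : ModA B) : Prop :=
  ∀ s : AlmostSplitSeq B, s.r.Iso M →
    ∀ (k : ℕ) (N : Fin k → Submodule B s.m.M),
      (∀ i, IsIndecMod B ↥(N i)) → iSupIndep N → (⨆ i, N i) = ⊤ → k ≤ 2

/-!
The heart of the matter is that an irreducible `f : X → Y` whose ends both lie on oriented cycles of
the Auslander-Reiten quiver has `Y` preceding `X` in `ind R`. Otherwise the successors of `Y`
generate a splitting torsion pair `(T, F)` with the oriented cycle through `X` in `F` and the one
through `Y` in `T`. Up to duality `f` is a monomorphism. Pushing it out along the irreducible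
morphisms of the cycle through `X` always yields a monomorphism from `F` to `T` that factors
through objects of `F` only in the trivial way, so no power of the composite of the cycle vanishes,
whereas a nonisomorphism of an indecomposable module of finite length into itself is nilpotent.

Hence any two modules of a cyclic component precede each other, and by sincerity every module of
the given path lies on a cycle through a cycle-finite module. The morphisms of such a cycle lie
outside the infinite radical, which forces paths of irreducible morphisms between their ends.
-/

section IrreducibleMorphisms

open CategoryTheory Limits

variable {𝒞 : Type*} [Category* 𝒞] {X Y : 𝒞} {f : X ⟶ Y}

/-- Irreducible morphisms in the sense of Auslander and Reiten. -/
structure IsIrreducibleHom (f : X ⟶ Y) : Prop where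
  not_isSplitMono : ¬IsSplitMono f
  not_isSplitEpi : ¬IsSplitEpi f
  isSplitMono_or_isSplitEpi ⦃Z : 𝒞⦄ (g : X ⟶ Z) (h : Z ⟶ Y) :
    g ≫ h = f → IsSplitMono g ∨ IsSplitEpi h

lemma IsIrreducibleHom.op (hf : IsIrreducibleHom f) : IsIrreducibleHom f.op where
  not_isSplitMono _ := hf.not_isSplitEpi <|
    .mk' ⟨(retraction f.op).unop, congr_arg Quiver.Hom.unop (IsSplitMono.id f.op)⟩
  not_isSplitEpi _ := hf.not_isSplitMono <|
    .mk' ⟨(section_ f.op).unop, congr_arg Quiver.Hom.unop (IsSplitEpi.id f.op)⟩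
  isSplitMono_or_isSplitEpi _ g h hgh :=
    (hf.isSplitMono_or_isSplitEpi h.unop g.unop (congr_arg Quiver.Hom.unop hgh)).symm.imp
      (fun h' ↦ h'.exists_splitEpi.elim fun s ↦ .mk' s.op)
      (fun h' ↦ h'.exists_splitMono.elim fun s ↦ .mk' s.op)

lemma IsIrreducibleHom.mono_or_epi [HasImages 𝒞] [HasEqualizers 𝒞] (hf : IsIrreducibleHom f) :
    Mono f ∨ Epi f := by
  have hfac : factorThruImage f ≫ image.ι f = f := image.fac f
  rw [← hfac]
  rcases hf.isSplitMono_or_isSplitEpi _ _ hfac with _ | _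
  · exact .inl inferInstance
  · exact .inr inferInstance

lemma IsIrreducibleHom.conj_iso {X' Y' : 𝒞} (hf : IsIrreducibleHom f) (α : X ≅ X') (β : Y ≅ Y') :
    IsIrreducibleHom (α.inv ≫ f ≫ β.hom) where
  not_isSplitMono _ := hf.not_isSplitMono <| by
    simpa using (inferInstance : IsSplitMono (α.hom ≫ (α.inv ≫ f ≫ β.hom) ≫ β.inv))
  not_isSplitEpi _ := hf.not_isSplitEpi <| by
    simpa using (inferInstance : IsSplitEpi (α.hom ≫ (α.inv ≫ f ≫ β.hom) ≫ β.inv))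
  isSplitMono_or_isSplitEpi Z g h hgh := by
    have hfac : (α.hom ≫ g) ≫ h ≫ β.inv = f := by simp [reassoc_of% hgh]
    rcases hf.isSplitMono_or_isSplitEpi _ _ hfac with _ | _
    · exact .inl (by simpa using (inferInstance : IsSplitMono (α.inv ≫ α.hom ≫ g)))
    · exact .inr (by simpa using (inferInstance : IsSplitEpi ((h ≫ β.inv) ≫ β.hom)))

lemma IsIrreducibleHom.ne_zero [HasZeroMorphisms 𝒞] [HasZeroObject 𝒞] (hf : IsIrreducibleHom f) :
    f ≠ 0 := by
  open ZeroObject in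
  rintro rfl
  rcases hf.isSplitMono_or_isSplitEpi (0 : X ⟶ 0) (0 : 0 ⟶ Y) zero_comp with h | h
  · exact hf.not_isSplitMono (.mk' ⟨0, by rw [zero_comp, ← IsSplitMono.id (0 : X ⟶ 0), zero_comp]⟩)
  · exact hf.not_isSplitEpi (.mk' ⟨0, by rw [zero_comp, ← IsSplitEpi.id (0 : 0 ⟶ Y), comp_zero]⟩)

lemma IsIrreducibleHom.not_isZero_left [HasZeroMorphisms 𝒞] (hf : IsIrreducibleHom f) :
    ¬IsZero X := fun hX ↦ hf.not_isSplitMono (.mk' ⟨0, hX.eq_of_src _ _⟩)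

lemma IsIrreducibleHom.eq_zero_of_comp_eq_zero [Preadditive 𝒞] [HasKernels 𝒞]
    (hf : IsIrreducibleHom f) {Z : 𝒞} {w : Y ⟶ Z} (hw : IsSplitEpi w) (hfw : f ≫ w = 0) :
    w = 0 := by
  have hr : (𝟙 Y - w ≫ section_ w) ≫ w = 0 := by simp [Preadditive.sub_comp]
  have : IsSplitMono (kernel.ι w) := .mk' ⟨kernel.lift w _ hr, by
    ext; simp [Preadditive.comp_sub]⟩
  rcases hf.isSplitMono_or_isSplitEpi _ _ (kernel.lift_ι w f hfw) with _ | _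
  · refine (hf.not_isSplitMono ?_).elim
    rw [← kernel.lift_ι w f hfw]
    infer_instance
  · rw [← cancel_epi (kernel.ι w), kernel.condition, comp_zero]

/-- The irreducible morphisms between objects satisfying `P`. -/
def irreducibleHomsIn (P : ObjectProperty 𝒞) : MorphismProperty 𝒞 :=
  fun X Y f ↦ IsIrreducibleHom f ∧ P X ∧ P Y

lemma irreducibleHomsIn_multiplicativeClosure_op {P : ObjectProperty 𝒞}
    (hf : (irreducibleHomsIn P).multiplicativeClosure f) :
    (irreducibleHomsIn P.op).multiplicativeClosure f.op := by
  have hle : (irreducibleHomsIn P).multiplicativeClosure ≤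
      (irreducibleHomsIn P.op).multiplicativeClosure.unop :=
    (MorphismProperty.multiplicativeClosure_le_iff _ _).2
      fun _ _ _ h ↦ .of _ ⟨h.1.op, h.2.2, h.2.1⟩
  exact hle _ hf

end IrreducibleMorphisms

section BicartesianSquares

open CategoryTheory Limits

variable {𝒞 : Type*} [Category* 𝒞] [Abelian 𝒞] {X₁ X₂ X₃ X₄ : 𝒞}
  {t : X₁ ⟶ X₂} {l : X₁ ⟶ X₃} {r : X₂ ⟶ X₄} {b : X₃ ⟶ X₄}

lemma isPullback_of_isPushout_of_mono (sq : IsPushout t l r b) (ht : Mono t) :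
    IsPullback t l r b := by
  have : Mono (biprod.lift t (-l)) := mono_of_mono_fac (biprod.lift_fst t (-l))
  have hker := Abelian.monoIsKernelOfCokernel _ sq.isColimitCokernelCofork
  refine ⟨sq.toCommSq, ⟨PullbackCone.isLimitAux' _ fun s ↦ ?_⟩⟩
  have hs : biprod.lift s.fst (-s.snd) ≫ biprod.desc r b = 0 := by simp [s.condition]
  let x : s.pt ⟶ X₁ := hker.lift (KernelFork.ofι _ hs)
  have hx : x ≫ biprod.lift t (-l) = biprod.lift s.fst (-s.snd) := Fork.IsLimit.lift_ι hker
  have hxt : x ≫ t = s.fst := by simpa using hx =≫ biprod.fst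
  exact ⟨x, hxt, by simpa using! hx =≫ biprod.snd,
    fun hx' _ ↦ (cancel_mono t).1 (hx'.trans hxt.symm)⟩

lemma isPushout_of_isPullback_of_epi (sq : IsPullback t l r b) (h : Epi (biprod.desc r b)) :
    IsPushout t l r b := by
  have hexact : sq.shortComplex.Exact := by
    rw [ShortComplex.exact_iff_exact_up_to_refinements]
    intro A (x : A ⟶ X₂ ⊞ X₃) (hx : x ≫ biprod.desc r b = 0)
    have hx' : (x ≫ biprod.fst) ≫ r = (-(x ≫ biprod.snd)) ≫ b := by
      rw [Preadditive.neg_comp, ← add_eq_zero_iff_eq_neg]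
      simpa [biprod.desc_eq] using hx
    refine ⟨A, 𝟙 A, inferInstance, sq.lift _ _ hx',
      (?_ : 𝟙 A ≫ x = sq.lift _ _ hx' ≫ biprod.lift t (-l))⟩
    ext <;> simp
  have : Epi sq.shortComplex.g := h
  exact ⟨sq.toCommSq, ⟨sq.isColimitEquivIsColimitCokernelCofork.symm hexact.gIsCokernel⟩⟩

lemma isPushout_pullback_lift (sq : IsPushout t l r b) (ht : Mono t) {N : 𝒞} {k : X₃ ⟶ N}
    {φ : N ⟶ X₄} (hk : k ≫ φ = b) {m : X₁ ⟶ pullback r φ} (hm : m ≫ pullback.fst r φ = t)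
    (hm' : m ≫ pullback.snd r φ = l ≫ k) : IsPushout m l (pullback.snd r φ) k := by
  have hpb : IsPullback (m ≫ pullback.fst r φ) l r (k ≫ φ) := by
    simpa only [hm, hk] using isPullback_of_isPushout_of_mono sq ht
  refine isPushout_of_isPullback_of_epi (hpb.of_right hm' (.of_hasPullback r φ)) ?_
  rw [epi_iff_surjective_up_to_refinements]
  intro A y
  obtain ⟨A', π, hπ, x₂, x₃, hx⟩ := sq.hom_eq_add_up_to_refinements (y ≫ φ)
  have hx' : x₂ ≫ r = (π ≫ y - x₃ ≫ k) ≫ φ := by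
    rw [Preadditive.sub_comp, Category.assoc, Category.assoc, hk, hx, add_sub_cancel_right]
  exact ⟨A', π, hπ, biprod.lift (pullback.lift _ _ hx') x₃,
    by rw [biprod.lift_desc, pullback.lift_snd, sub_add_cancel]⟩

end BicartesianSquares

section SplitTorsionPairs

open CategoryTheory Limits

variable {𝒞 : Type*} [Category* 𝒞] [Abelian 𝒞] {T F : ObjectProperty 𝒞}

/-- A splitting torsion pair `(T, F)`: each class is the orthogonal of the other, and every object
is a direct sum of objects of `T` and of `F`. The latter is encoded by writing the identity as a sum
of idempotents with image in `T` or `F`. -/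
structure IsSplitTorsionPair (T F : ObjectProperty 𝒞) : Prop where
  eq_leftOrthogonal : T = F.leftOrthogonal
  eq_rightOrthogonal : F = T.rightOrthogonal
  id_mem_closure (W : 𝒞) : 𝟙 W ∈ AddSubgroup.closure
    {e : W ⟶ W | ∃ (V : 𝒞) (ρ : Retract V W), (T V ∨ F V) ∧ e = ρ.r ≫ ρ.i}

lemma IsSplitTorsionPair.op (h : IsSplitTorsionPair T F) : IsSplitTorsionPair F.op T.op where
  eq_leftOrthogonal := by
    ext W
    conv_lhs => rw [h.eq_rightOrthogonal]
    exact ⟨fun hW V f hV ↦ Quiver.Hom.unop_inj (hW f.unop hV),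
      fun hW V f hV ↦ Quiver.Hom.op_inj (hW f.op hV)⟩
  eq_rightOrthogonal := by
    ext W
    conv_lhs => rw [h.eq_leftOrthogonal]
    exact ⟨fun hW V f hV ↦ Quiver.Hom.unop_inj (hW f.unop hV),
      fun hW V f hV ↦ Quiver.Hom.op_inj (hW f.op hV)⟩
  id_mem_closure W := by
    refine AddSubgroup.closure_induction (p := fun e _ ↦ e.op ∈ AddSubgroup.closure _) ?_
      (zero_mem _) (fun _ _ _ _ ↦ add_mem) (fun _ _ ↦ neg_mem) (h.id_mem_closure W.unop)
    rintro _ ⟨V, ρ, hV, rfl⟩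
    exact AddSubgroup.subset_closure ⟨.op V, ρ.op, hV.symm, rfl⟩

/-- A monomorphism from a torsion-free to a torsion object which factors through a torsion-free
object only along a split monomorphism. -/
structure IsTightMono (T F : ObjectProperty 𝒞) {X V : 𝒞} (f : X ⟶ V) : Prop where
  mono : Mono f
  prop_source : F X
  prop_target : T V
  isSplitMono_of_fac ⦃N : 𝒞⦄ (k : X ⟶ N) (h : N ⟶ V) : F N → k ≫ h = f → IsSplitMono k

namespace IsSplitTorsionPair

variable (h : IsSplitTorsionPair T F) {V N X X' V' : 𝒞}
include h

lemma hom_eq_zero (hV : T V) (hN : F N) (φ : V ⟶ N) : φ = 0 := by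
  rw [h.eq_leftOrthogonal] at hV
  exact hV φ hN

lemma prop_biprod (hX : F X) (hN : F N) : F (X ⊞ N) := by
  rw [h.eq_rightOrthogonal]
  intro Z z hZ
  ext
  · simpa using h.hom_eq_zero hZ hX (z ≫ biprod.fst)
  · simpa using h.hom_eq_zero hZ hN (z ≫ biprod.snd)

lemma prop_pullback {f : X ⟶ V} {g : X ⟶ X'} {u : V ⟶ V'} {f' : X' ⟶ V'}
    (sq : IsPullback f g u f') (hX : F X) (hN : F N) (φ : N ⟶ V') : F (pullback u φ) := by
  rw [h.eq_rightOrthogonal]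
  intro Z z hZ
  have hzφ : z ≫ pullback.snd u φ = 0 := h.hom_eq_zero hZ hN _
  have hzu : (z ≫ pullback.fst u φ) ≫ u = 0 ≫ f' := by
    rw [Category.assoc, pullback.condition, reassoc_of% hzφ, zero_comp, zero_comp]
  apply pullback.hom_ext
  · rw [← sq.lift_fst _ _ hzu, h.hom_eq_zero hZ hX (sq.lift _ _ hzu)]
    simp
  · simpa using hzφ

lemma exists_lift_of_isPushout {f : X ⟶ V} {g : X ⟶ X'} {u : V ⟶ V'} {f' : X' ⟶ V'}
    (hf : IsTightMono T F f) (sq : IsPushout f g u f') (hN : F N) {k : X' ⟶ N} {φ : N ⟶ V'}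
    (hk : k ≫ φ = f') :
    ∃ (a : N ⟶ V) (s : N ⟶ X'), k ≫ s = 𝟙 X' ∧ a ≫ u + s ≫ f' = φ := by
  -- The pullback of `u` and `φ` is torsion-free, so tightness of `f` splits `l`, and hence its
  -- pushout `k`.
  let l : X ⟶ pullback u φ := pullback.lift f (g ≫ k) (by rw [sq.w, Category.assoc, hk])
  have hl : l ≫ pullback.fst u φ = f := pullback.lift_fst _ _ _
  have hl' : l ≫ pullback.snd u φ = g ≫ k := pullback.lift_snd _ _ _
  have sqN := isPushout_pullback_lift sq hf.mono hk hl hl'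
  have hL := h.prop_pullback (isPullback_of_isPushout_of_mono sq hf.mono) hf.prop_source hN φ
  have : IsSplitMono l := hf.isSplitMono_of_fac l (pullback.fst u φ) hL hl
  have ha : l ≫ (pullback.fst u φ - retraction l ≫ f) = g ≫ 0 := by simp [hl]
  have hs : l ≫ retraction l ≫ g = g ≫ 𝟙 X' := by simp
  refine ⟨sqN.desc _ _ ha, sqN.desc _ _ hs, sqN.inr_desc _ _ hs, sqN.hom_ext ?_ ?_⟩
  · simp [Preadditive.comp_add, Preadditive.sub_comp, sq.w, pullback.condition]
  · simp [Preadditive.comp_add, hk]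

lemma isSplitEpi_comp_of_isPushout {f : X ⟶ V} {g : X ⟶ X'} {u : V ⟶ V'} {f' : X' ⟶ V'}
    (hf : IsTightMono T F f) (sq : IsPushout f g u f') (hX' : F X') (hN : F N)
    (σ : Retract N V') : IsSplitEpi (f' ≫ σ.r) := by
  obtain ⟨a, s, -, hs⟩ := h.exists_lift_of_isPushout hf sq (h.prop_biprod hN hX')
    (biprod.inr_desc σ.i f')
  have hu : u ≫ σ.r = 0 := h.hom_eq_zero hf.prop_target hN _
  refine .mk' ⟨biprod.inl ≫ s, ?_⟩
  rw [← σ.retract, ← biprod.inl_desc σ.i f', ← hs]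
  simp [Preadditive.comp_add, Preadditive.add_comp, hu]

end IsSplitTorsionPair

lemma IsTightMono.of_isPushout (h : IsSplitTorsionPair T F) {V X X' V' : 𝒞} {f : X ⟶ V}
    {g : X ⟶ X'} {u : V ⟶ V'} {f' : X' ⟶ V'} (hf : IsTightMono T F f) (hg : IsIrreducibleHom g)
    (hX' : F X') (sq : IsPushout f g u f') : IsTightMono T F f' where
  mono := MorphismProperty.of_isPushout sq.flip hf.mono
  prop_source := hX'
  isSplitMono_of_fac N k φ hN hk :=
    let ⟨_, s, hs, _⟩ := h.exists_lift_of_isPushout hf sq hN hk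
    .mk' ⟨s, hs⟩
  prop_target := by
    have hF {C : 𝒞} (ρ : Retract C V') (hC : F C) : ρ.r = 0 := by
      have hu : u ≫ ρ.r = 0 := h.hom_eq_zero hf.prop_target hC _
      have hw : f' ≫ ρ.r = 0 :=
        hg.eq_zero_of_comp_eq_zero (h.isSplitEpi_comp_of_isPushout hf sq hX' hC ρ) <| by
          rw [← sq.w_assoc, hu, comp_zero]
      exact sq.hom_ext (by simp [hu]) (by simp [hw])
    rw [h.eq_leftOrthogonal]
    intro Z z hZ
    rw [← Category.id_comp z]
    refine AddSubgroup.closure_induction (p := fun e _ ↦ e ≫ z = 0) ?_ zero_comp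
      (fun _ _ _ _ hx hy ↦ by rw [Preadditive.add_comp, hx, hy, add_zero])
      (fun _ _ hx ↦ by rw [Preadditive.neg_comp, hx, neg_zero]) (h.id_mem_closure V')
    rintro _ ⟨C, ρ, hC | hC, rfl⟩
    · rw [Category.assoc, h.hom_eq_zero hC hZ (ρ.i ≫ z), comp_zero]
    · rw [hF ρ hC, zero_comp, zero_comp]

lemma IsIrreducibleHom.isTightMono (h : IsSplitTorsionPair T F) {X Y : 𝒞} {f : X ⟶ Y}
    (hf : IsIrreducibleHom f) (hm : Mono f) (hX : F X) (hY : T Y) : IsTightMono T F f where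
  mono := hm
  prop_source := hX
  prop_target := hY
  isSplitMono_of_fac N k φ hN hk := by
    refine (hf.isSplitMono_or_isSplitEpi k φ hk).resolve_right fun _ ↦ hf.not_isSplitEpi ?_
    have hY₀ : 𝟙 Y = 0 := by
      rw [← IsSplitEpi.id φ, h.hom_eq_zero hY hN (section_ φ), zero_comp]
    exact .mk' ⟨0, by rw [zero_comp, hY₀]⟩

lemma IsTightMono.exists_isPushout (h : IsSplitTorsionPair T F) {X X' V : 𝒞} {f : X ⟶ V}
    (hf : IsTightMono T F f) {φ : X ⟶ X'} (hφ : (irreducibleHomsIn F).multiplicativeClosure φ) :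
    ∃ (V' : 𝒞) (u : V ⟶ V') (f' : X' ⟶ V'), IsPushout f φ u f' ∧ IsTightMono T F f' := by
  induction hφ with
  | of g hg =>
    exact ⟨_, _, _, .of_hasPushout f g, hf.of_isPushout h hg.1 hg.2.2 (.of_hasPushout f g)⟩
  | id => exact ⟨V, 𝟙 V, f, .of_id_snd, hf⟩
  | comp_of ψ g _ hg ih =>
    obtain ⟨V₁, u₁, f₁, sq₁, hf₁⟩ := ih hf
    exact ⟨_, _, _, sq₁.paste_vert (.of_hasPushout f₁ g),
      hf₁.of_isPushout h hg.1 hg.2.2 (.of_hasPushout f₁ g)⟩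

lemma IsTightMono.ne_zero_of_multiplicativeClosure (h : IsSplitTorsionPair T F) {X X' V : 𝒞}
    {f : X ⟶ V} (hf : IsTightMono T F f) {φ : X ⟶ X'}
    (hφ : (irreducibleHomsIn F).multiplicativeClosure φ) (hX' : ¬IsZero X') : φ ≠ 0 := by
  rintro rfl
  obtain ⟨V', u, f', sq, hf'⟩ := hf.exists_isPushout h hφ
  have hr : f' ≫ sq.desc 0 (𝟙 X') (by simp) = 𝟙 X' := sq.inr_desc _ _ _
  rw [h.hom_eq_zero hf'.prop_target hf'.prop_source (sq.desc _ _ _), comp_zero] at hr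
  exact hX' ((IsZero.iff_id_eq_zero X').2 hr.symm)

lemma IsIrreducibleHom.ne_zero_of_multiplicativeClosure_of_mono (h : IsSplitTorsionPair T F)
    {X Y : 𝒞} {f : X ⟶ Y} (hf : IsIrreducibleHom f) (hm : Mono f) (hX : F X) (hY : T Y) {φ : X ⟶ X}
    (hφ : (irreducibleHomsIn F).multiplicativeClosure φ) : φ ≠ 0 :=
  (hf.isTightMono h hm hX hY).ne_zero_of_multiplicativeClosure h hφ hf.not_isZero_left

lemma IsIrreducibleHom.ne_zero_of_multiplicativeClosure_of_epi (h : IsSplitTorsionPair T F)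
    {X Y : 𝒞} {f : X ⟶ Y} (hf : IsIrreducibleHom f) (_ : Epi f) (hX : F X) (hY : T Y) {ψ : Y ⟶ Y}
    (hψ : (irreducibleHomsIn T).multiplicativeClosure ψ) : ψ ≠ 0 := fun hψ₀ ↦
  hf.op.ne_zero_of_multiplicativeClosure_of_mono h.op inferInstance hY hX
    (irreducibleHomsIn_multiplicativeClosure_op hψ) (congr_arg Quiver.Hom.op hψ₀)

lemma IsIrreducibleHom.not_isNilpotent_or_not_isNilpotent (h : IsSplitTorsionPair T F) {X Y : 𝒞}
    {f : X ⟶ Y} (hf : IsIrreducibleHom f) (hX : F X) (hY : T Y) {φ : End X} {ψ : End Y}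
    (hφ : (irreducibleHomsIn F).multiplicativeClosure φ)
    (hψ : (irreducibleHomsIn T).multiplicativeClosure ψ) :
    ¬IsNilpotent φ ∨ ¬IsNilpotent ψ := by
  have pow_mem (P : ObjectProperty 𝒞) {Z : 𝒞} {θ : End Z}
      (hθ : (irreducibleHomsIn P).multiplicativeClosure θ) (n : ℕ) :
      (irreducibleHomsIn P).multiplicativeClosure (θ ^ n) := by
    induction n with
    | zero => exact .id Z
    | succ n ih => exact MorphismProperty.comp_mem _ _ _ hθ ih
  refine hf.mono_or_epi.imp (fun hm ⟨n, hn⟩ ↦ ?_) (fun he ⟨n, hn⟩ ↦ ?_)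
  · exact hf.ne_zero_of_multiplicativeClosure_of_mono h hm hX hY (pow_mem F hφ n) hn
  · exact hf.ne_zero_of_multiplicativeClosure_of_epi h he hX hY (pow_mem T hψ n) hn

end SplitTorsionPairs

section AbelianStructure

open CategoryTheory Limits

namespace ModA

variable {R : Type u} [Ring R]

instance : Category (ModA R) where
  Hom X Y := X.M →ₗ[R] Y.M
  id _ := LinearMap.id
  comp f g := g.comp f

instance : Preadditive (ModA R) where
  homGroup X Y := inferInstanceAs (AddCommGroup (X.M →ₗ[R] Y.M))
  add_comp _ _ _ f f' g := LinearMap.comp_add f f' g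
  comp_add _ _ _ f g g' := LinearMap.add_comp f g' g

/-- The modules of finite length, as a class of objects of `ModuleCat R`. -/
def finiteLength (R : Type u) [Ring R] : ObjectProperty (ModuleCat.{u} R) :=
  fun M ↦ IsFiniteLength R M

instance : (finiteLength R).IsClosedUnderSubobjects where
  prop_of_mono f _ hY := hY.of_injective ((ModuleCat.mono_iff_injective f).1 inferInstance)

instance : (finiteLength R).IsClosedUnderQuotients where
  prop_of_epi f _ hX := hX.of_surjective ((ModuleCat.epi_iff_surjective f).1 inferInstance)

instance : (finiteLength R).ContainsZero where
  exists_zero := ⟨.of R PUnit, ModuleCat.isZero_of_subsingleton _, .of_subsingleton⟩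

instance : (finiteLength R).IsClosedUnderFiniteProducts where
  isClosedUnderLimitsOfShape J _ := by
    refine ⟨fun M ⟨h⟩ ↦ ?_⟩
    have hfin (j : J) := isFiniteLength_iff_isNoetherian_isArtinian.1 (h.prop_diag_obj ⟨j⟩)
    have (j : J) := (hfin j).1
    have (j : J) := (hfin j).2
    let toPi : M ⟶ .of R (∀ j : J, h.diag.obj ⟨j⟩) :=
      ModuleCat.ofHom (.pi fun j ↦ (h.π.app ⟨j⟩).hom)
    have : Mono toPi := ⟨fun a b hab ↦ h.isLimit.hom_ext fun ⟨j⟩ ↦ by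
      ext x
      exact congr_fun (ConcreteCategory.congr_hom hab x) j⟩
    exact (finiteLength R).prop_of_mono toPi
      (isFiniteLength_iff_isNoetherian_isArtinian.2 ⟨inferInstance, inferInstance⟩)

/-- The equivalence of `ModA R` with the modules of finite length in `ModuleCat R`, along which the
abelian structure is transported. -/
def toFiniteLength (R : Type u) [Ring R] : ModA R ⥤ (finiteLength R).FullSubcategory where
  obj X := ⟨.of R X.M, X.finLen⟩
  map f := (finiteLength R).homMk (ModuleCat.ofHom f)

instance : (toFiniteLength R).IsEquivalence where
  faithful := ⟨fun h ↦ congr_arg (fun φ ↦ φ.hom.hom) h⟩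
  full := ⟨fun f ↦ ⟨f.hom.hom, rfl⟩⟩
  essSurj := ⟨fun Y ↦ ⟨⟨Y.obj, Y.property⟩, ⟨Iso.refl _⟩⟩⟩

instance : HasFiniteProducts (ModA R) :=
  ⟨fun _ ↦ Adjunction.hasLimitsOfShape_of_equivalence (toFiniteLength R)⟩

noncomputable instance : Abelian (ModA R) := abelianOfEquivalence (toFiniteLength R)

lemma splitMonoMap_iff {X Y : ModA R} (f : X ⟶ Y) : SplitMonoMap f ↔ IsSplitMono f :=
  ⟨fun ⟨r, hr⟩ ↦ .mk' ⟨r, hr⟩, fun ⟨⟨s⟩⟩ ↦ ⟨s.retraction, s.id⟩⟩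

lemma splitEpiMap_iff {X Y : ModA R} (f : X ⟶ Y) : SplitEpiMap f ↔ IsSplitEpi f :=
  ⟨fun ⟨s, hs⟩ ↦ .mk' ⟨s, hs⟩, fun ⟨⟨s⟩⟩ ↦ ⟨s.section_, s.id⟩⟩

lemma isIrred_iff {X Y : ModA R} (f : X ⟶ Y) : IsIrred f ↔ IsIrreducibleHom f := by
  simp only [IsIrred, splitMonoMap_iff, splitEpiMap_iff]
  exact ⟨fun ⟨h₁, h₂, h₃⟩ ↦ ⟨h₁, h₂, h₃⟩, fun ⟨h₁, h₂, h₃⟩ ↦ ⟨h₁, h₂, h₃⟩⟩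

end ModA

end AbelianStructure

section Indecomposables

open CategoryTheory Limits

variable {R : Type u} [Ring R]

lemma IsIndecMod.eq_bot_or_eq_bot {M : Type u} [AddCommGroup M] [Module R M]
    (hM : IsIndecMod R M) {S T : Submodule R M} (h : IsCompl S T) : S = ⊥ ∨ T = ⊥ := by
  refine (hM.2 (S.projection T h) (Submodule.isIdempotentElem_projection h)).imp ?_ ?_
  · exact fun h₀ ↦ by rw [← Submodule.range_projection h, h₀, LinearMap.range_zero]
  · exact fun h₁ ↦ by rw [← Submodule.ker_projection h, h₁, Module.End.one_eq_id, LinearMap.ker_id]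

namespace ModA

variable {X Y : ModA R}

instance (X : ModA R) : IsNoetherian R X.M :=
  (isFiniteLength_iff_isNoetherian_isArtinian.1 X.finLen).1

instance (X : ModA R) : IsArtinian R X.M :=
  (isFiniteLength_iff_isNoetherian_isArtinian.1 X.finLen).2

lemma isIso_iff_bijective (f : X.M →ₗ[R] Y.M) :
    IsIso (X := X) (Y := Y) f ↔ Function.Bijective f := by
  refine ⟨fun ⟨g, hfg, hgf⟩ ↦ ?_, fun h ↦ ?_⟩
  · exact Function.bijective_iff_has_inverse.2 ⟨DFunLike.coe (F := Y.M →ₗ[R] X.M) g,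
      LinearMap.congr_fun hfg, LinearMap.congr_fun hgf⟩
  · let e := LinearEquiv.ofBijective f h
    exact ⟨e.symm.toLinearMap, LinearMap.ext e.symm_apply_apply, LinearMap.ext e.apply_symm_apply⟩

lemma isZero_iff_subsingleton : IsZero X ↔ Subsingleton X.M := by
  rw [IsZero.iff_id_eq_zero]
  exact ⟨fun h ↦ ⟨fun x y ↦ (LinearMap.congr_fun h x).trans (LinearMap.congr_fun h y).symm⟩,
    fun _ ↦ LinearMap.ext fun x ↦ Subsingleton.elim _ _⟩

lemma IsIndec.not_isZero (hX : X.IsIndec) : ¬IsZero X := by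
  rw [isZero_iff_subsingleton, not_subsingleton_iff_nontrivial]
  exact hX.1

lemma IsIndec.isNilpotent_of_not_isIso (hX : X.IsIndec) {θ : End X} (hθ : ¬IsIso θ) :
    IsNilpotent θ := by
  let θ' : Module.End R X.M := θ
  obtain ⟨n, hn, hn₀⟩ := (θ'.eventually_isCompl_ker_pow_range_pow.and
    (Filter.eventually_ne_atTop 0)).exists
  refine (hX.eq_bot_or_eq_bot hn).elim (fun h ↦ (hθ ?_).elim)
    fun h ↦ ⟨n, LinearMap.range_eq_bot.1 h⟩
  have hinj : Function.Injective (θ' ^ n) := LinearMap.ker_eq_bot.1 h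
  have hinj' : Function.Injective θ' := by
    rw [Module.End.coe_pow] at hinj
    exact .of_comp (by rwa [← Function.iterate_succ, Nat.succ_pred hn₀])
  exact (isIso_iff_bijective θ').2 (IsArtinian.bijective_of_injective_endomorphism θ' hinj')

lemma IsIndec.isIso_of_isSplitMono (hY : Y.IsIndec) (hX : ¬IsZero X) {f : X ⟶ Y}
    (hf : IsSplitMono f) : IsIso f := by
  have he : (retraction f ≫ f) ≫ retraction f ≫ f = retraction f ≫ f := by simp
  refine (hY.2 _ he).elim (fun h ↦ (hX ((IsZero.iff_id_eq_zero X).2 ?_)).elim)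
    fun h ↦ ⟨retraction f, IsSplitMono.id f, h⟩
  have h₀ : retraction f ≫ f = 0 := h
  rw [← cancel_mono f, zero_comp, ← IsSplitMono.id f, Category.assoc, h₀, comp_zero]

lemma IsIndec.isIso_of_isSplitEpi (hX : X.IsIndec) (hY : ¬IsZero Y) {f : X ⟶ Y}
    (hf : IsSplitEpi f) : IsIso f := by
  have := hX.isIso_of_isSplitMono hY (inferInstance : IsSplitMono (section_ f))
  exact IsIso.of_isIso_fac_left (IsSplitEpi.id f)

lemma exists_retract_of_isIdempotentElem {e : End X} (he : IsIdempotentElem e) (he₁ : e ≠ 1) :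
    ∃ (W : ModA R) (ρ : Retract W X), ρ.r ≫ ρ.i = e ∧
      Module.length R W.M < Module.length R X.M := by
  let e' : Module.End R X.M := e
  have hsub : (LinearMap.range e').subtype ∘ₗ e'.rangeRestrict = e' := rfl
  refine ⟨⟨LinearMap.range e', X.finLen.of_injective (Submodule.subtype_injective _)⟩,
    ⟨(LinearMap.range e').subtype, e'.rangeRestrict, ?_⟩, hsub, Submodule.length_lt fun h ↦ he₁ ?_⟩
  · refine LinearMap.ext ?_
    rintro ⟨_, x, rfl⟩
    exact Subtype.ext (LinearMap.congr_fun he x)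
  · refine LinearMap.ext fun x ↦ ?_
    obtain ⟨y, rfl⟩ := LinearMap.range_eq_top.1 h x
    exact LinearMap.congr_fun he y

lemma id_mem_closure_isIndec (X : ModA R) : 𝟙 X ∈ AddSubgroup.closure
    {e : X ⟶ X | ∃ (W : ModA R) (ρ : Retract W X), W.IsIndec ∧ e = ρ.r ≫ ρ.i} := by
  induction hn : Module.length R X.M using WellFoundedLT.induction generalizing X with
  | ind n ih =>
    subst hn
    let S := AddSubgroup.closure
      {e : X ⟶ X | ∃ (W : ModA R) (ρ : Retract W X), W.IsIndec ∧ e = ρ.r ≫ ρ.i}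
    have mem_of_isIdempotentElem {e : End X} (he : IsIdempotentElem e) (he₁ : e ≠ 1) : e ∈ S := by
      obtain ⟨W, ρ, rfl, hW⟩ := exists_retract_of_isIdempotentElem he he₁
      rw [← Category.id_comp ρ.i]
      refine AddSubgroup.closure_induction (p := fun d _ ↦ ρ.r ≫ d ≫ ρ.i ∈ S) ?_ (by simp)
        (fun _ _ _ _ hx hy ↦ by simpa using add_mem hx hy)
        (fun _ _ hx ↦ by simpa using neg_mem hx) (ih _ hW W rfl)
      rintro _ ⟨V, σ, hV, rfl⟩
      exact AddSubgroup.subset_closure ⟨V, σ.trans ρ, hV, by simp⟩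
    by_cases hX : IsZero X
    · rw [(IsZero.iff_id_eq_zero X).1 hX]
      exact zero_mem _
    by_cases hX' : X.IsIndec
    · exact AddSubgroup.subset_closure ⟨X, .refl X, hX', by simp⟩
    rw [isZero_iff_subsingleton, not_subsingleton_iff_nontrivial] at hX
    obtain ⟨e, he, he₀, he₁⟩ : ∃ e : End X, IsIdempotentElem e ∧ e ≠ 0 ∧ e ≠ 1 := by
      by_contra! h
      exact hX' ⟨hX, fun e he ↦ or_iff_not_imp_left.2 (h e he)⟩
    rw [← End.one_def, ← add_sub_cancel e 1]
    exact add_mem (mem_of_isIdempotentElem he he₁)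
      (mem_of_isIdempotentElem he.one_sub (by simpa using he₀))

end ModA

end Indecomposables

section Radical

open CategoryTheory Limits

variable {R : Type u} [Ring R] {X Y Z : ModA R}

lemma inRad_iff (f : X ⟶ Y) :
    InRad f ↔ ∀ Z : ModA R, Z.IsIndec → ∀ (g : Z ⟶ X) (h : Y ⟶ Z), ¬IsIso (g ≫ f ≫ h) :=
  forall₄_congr fun _ _ _ _ ↦ (ModA.isIso_iff_bijective _).not.symm

lemma InRad.comp_right {f : X ⟶ Y} (hf : InRad f) (k : Y ⟶ Z) : InRad (f ≫ k) :=
  fun W hW g h ↦ hf W hW g (k ≫ h)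

lemma InRad.comp_left {f : X ⟶ Y} (hf : InRad f) (k : Z ⟶ X) : InRad (k ≫ f) :=
  fun W hW g h ↦ hf W hW (g ≫ k) h

lemma InRad.not_isSplitMono {f : X ⟶ Y} (hf : InRad f) (hX : X.IsIndec) : ¬IsSplitMono f :=
  fun _ ↦ (inRad_iff f).1 hf X hX (𝟙 X) (retraction f) (by simpa using IsIso.id X)

lemma InRad.not_isSplitEpi {f : X ⟶ Y} (hf : InRad f) (hY : Y.IsIndec) : ¬IsSplitEpi f :=
  fun _ ↦ (inRad_iff f).1 hf Y hY (section_ f) (𝟙 Y) (by simpa using IsIso.id Y)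

namespace ModA

lemma IsIndec.isSplitMono_of_not_inRad (hX : X.IsIndec) {f : X ⟶ Y} (hf : ¬InRad f) :
    IsSplitMono f := by
  rw [inRad_iff] at hf
  push Not at hf
  obtain ⟨W, hW, g, h, _⟩ := hf
  have hg : IsSplitMono g := .mk' ⟨(f ≫ h) ≫ inv (g ≫ f ≫ h), by
    rw [← Category.assoc, IsIso.hom_inv_id]⟩
  have := hX.isIso_of_isSplitMono hW.not_isZero hg
  have : IsIso (f ≫ h) := .of_isIso_comp_left g _
  exact .mk' ⟨h ≫ inv (f ≫ h), by rw [← Category.assoc, IsIso.hom_inv_id]⟩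

lemma IsIndec.isSplitEpi_of_not_inRad (hY : Y.IsIndec) {f : X ⟶ Y} (hf : ¬InRad f) :
    IsSplitEpi f := by
  rw [inRad_iff] at hf
  push Not at hf
  obtain ⟨W, hW, g, h, _⟩ := hf
  have hh : IsSplitEpi h := .mk' ⟨inv (g ≫ f ≫ h) ≫ g ≫ f, by simp⟩
  have := hY.isIso_of_isSplitEpi hW.not_isZero hh
  have : IsIso ((g ≫ f) ≫ h) := by simpa
  have : IsIso (g ≫ f) := .of_isIso_comp_right _ h
  exact .mk' ⟨inv (g ≫ f) ≫ g, by rw [Category.assoc, IsIso.inv_hom_id]⟩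

lemma exists_isIndec_retract_of_comp_notMem {S : AddSubgroup (X ⟶ Y)} {g : X ⟶ Z} {h : Z ⟶ Y}
    (hgh : g ≫ h ∉ S) :
    ∃ (W : ModA R) (ρ : Retract W Z), W.IsIndec ∧ (g ≫ ρ.r) ≫ ρ.i ≫ h ∉ S := by
  by_contra! hS
  refine hgh ?_
  rw [← Category.id_comp h]
  refine AddSubgroup.closure_induction (p := fun e _ ↦ g ≫ e ≫ h ∈ S) ?_ (by simp)
    (fun _ _ _ _ hx hy ↦ by simpa using add_mem hx hy)
    (fun _ _ hx ↦ by simpa using neg_mem hx) (id_mem_closure_isIndec Z)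
  rintro _ ⟨W, ρ, hW, rfl⟩
  simpa using hS W ρ hW

end ModA

lemma comp_mem_radPow_succ {n : ℕ} {g : X ⟶ Z} {h : Z ⟶ Y} (hg : InRad g)
    (hh : h ∈ radPow R n Z Y) : g ≫ h ∈ radPow R (n + 1) X Y :=
  AddSubgroup.subset_closure ⟨Z, g, h, hg, hh, rfl⟩

lemma comp_mem_radPow {n : ℕ} (k : X ⟶ Y) {f : Y ⟶ Z} (hf : f ∈ radPow R n Y Z) :
    k ≫ f ∈ radPow R n X Z := by
  cases n with
  | zero => exact AddSubgroup.mem_top _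
  | succ n =>
    refine AddSubgroup.closure_induction (p := fun f _ ↦ k ≫ (f : Y ⟶ Z) ∈ radPow R (n + 1) X Z)
      ?_ ?_ (fun _ _ _ _ hx hy ↦ ?_) (fun _ _ hx ↦ ?_) hf
    · rintro _ ⟨W, g, h, hg, hh, rfl⟩
      exact AddSubgroup.subset_closure ⟨W, k ≫ g, h, hg.comp_left k, hh, rfl⟩
    · exact zero_mem _
    · rw [Preadditive.comp_add]
      exact add_mem hx hy
    · rw [Preadditive.comp_neg]
      exact neg_mem hx

lemma InRad.isIrreducibleHom (hX : X.IsIndec) (hZ : Z.IsIndec) {n : ℕ} {g : X ⟶ Z} {h : Z ⟶ Y}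
    (hg : InRad g) (hh : h ∈ radPow R n Z Y) (hgh : g ≫ h ∉ radPow R (n + 2) X Y) :
    IsIrreducibleHom g where
  not_isSplitMono := hg.not_isSplitMono hX
  not_isSplitEpi := hg.not_isSplitEpi hZ
  isSplitMono_or_isSplitEpi W a b hab := by
    by_contra! hsplit
    have ha : InRad a := of_not_not fun h ↦ hsplit.1 (hX.isSplitMono_of_not_inRad h)
    have hb : InRad b := of_not_not fun h ↦ hsplit.2 (hZ.isSplitEpi_of_not_inRad h)
    rw [← hab, Category.assoc] at hgh
    exact hgh (comp_mem_radPow_succ ha (comp_mem_radPow_succ hb hh))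

lemma exists_isIrreducibleHom_of_mem_radPow (hX : X.IsIndec) {n : ℕ} {f : X ⟶ Y}
    (hf : f ∈ radPow R (n + 1) X Y) (hf' : f ∉ radPow R (n + 2) X Y) :
    ∃ (Z : ModA R) (g : X ⟶ Z) (h : Z ⟶ Y), Z.IsIndec ∧ IsIrreducibleHom g ∧
      h ∈ radPow R n Z Y ∧ h ∉ radPow R (n + 1) Z Y := by
  obtain ⟨Z, g, h, hg, hh, hgh⟩ : ∃ (Z : ModA R) (g : X ⟶ Z) (h : Z ⟶ Y),
      InRad g ∧ h ∈ radPow R n Z Y ∧ g ≫ h ∉ radPow R (n + 2) X Y := by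
    by_contra! hS
    refine hf' ((AddSubgroup.closure_le _).2 ?_ hf)
    rintro _ ⟨Z, g, h, hg, hh, rfl⟩
    exact hS Z g h hg hh
  obtain ⟨W, ρ, hW, hρ⟩ := ModA.exists_isIndec_retract_of_comp_notMem hgh
  have hg' := hg.comp_right ρ.r
  have hh' := comp_mem_radPow ρ.i hh
  exact ⟨W, g ≫ ρ.r, ρ.i ≫ h, hW, hg'.isIrreducibleHom hX hW hh' hρ, hh',
    fun h ↦ hρ (comp_mem_radPow_succ hg' h)⟩

end Radical

section VertexPaths

open CategoryTheory Limits Relation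

variable {R : Type u} [Ring R]

namespace ARVertex

/-- A chosen module representing a vertex. -/
noncomputable def rep (x : ARVertex R) : IndecModA R := Quotient.out (s := isoSetoid R) x

lemma mk_rep (x : ARVertex R) : mk x.rep = x := Quotient.out_eq (s := isoSetoid R) x

lemma nonempty_iso_of_mk_eq {X Y : IndecModA R} (h : mk X = mk Y) : Nonempty (X.1 ≅ Y.1) := by
  obtain ⟨e⟩ := Quotient.exact (s := isoSetoid R) h
  exact ⟨⟨e.toLinearMap, e.symm.toLinearMap, LinearMap.ext e.symm_apply_apply,
    LinearMap.ext e.apply_symm_apply⟩⟩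

lemma mk_eq_of_isIso {X Y : IndecModA R} (f : X.1 ⟶ Y.1) (hf : IsIso f) : mk X = mk Y :=
  Quotient.sound (s := isoSetoid R) ⟨.ofBijective _ ((ModA.isIso_iff_bijective f).1 hf)⟩

/-- There is a nonzero nonisomorphism between the modules representing the vertices. -/
def HasProperHom (x y : ARVertex R) : Prop := ∃ f : x.rep.1 ⟶ y.rep.1, f ≠ 0 ∧ ¬IsIso f

lemma hasProperHom_mk {X Y : IndecModA R} {f : X.1 ⟶ Y.1} (hf : f ≠ 0) (hf' : ¬IsIso f) :
    (mk X).HasProperHom (mk Y) := by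
  obtain ⟨α⟩ := nonempty_iso_of_mk_eq (mk_rep (mk X))
  obtain ⟨β⟩ := nonempty_iso_of_mk_eq (mk_rep (mk Y))
  exact ⟨α.hom ≫ f ≫ β.inv, by simpa using! hf, by simpa using! hf'⟩

/-- `x.Precedes y` if there is a path of nonzero nonisomorphisms in `ind R` from the module at `x`
to the module at `y`; trivial paths are allowed. -/
def Precedes : ARVertex R → ARVertex R → Prop := ReflTransGen HasProperHom

lemma precedes_of_ne_zero {X Y : IndecModA R} {f : X.1 ⟶ Y.1} (hf : f ≠ 0) :
    (mk X).Precedes (mk Y) := by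
  by_cases hf' : IsIso f
  · rw [mk_eq_of_isIso f hf']
    exact .refl
  · exact .single (hasProperHom_mk hf hf')

end ARVertex

lemma ARArrow.exists_isIrreducibleHom {x y : ARVertex R} (h : ARArrow x y) :
    ∃ f : x.rep.1 ⟶ y.rep.1, IsIrreducibleHom f := by
  obtain ⟨X, Y, f, hf, rfl, rfl⟩ := h
  obtain ⟨α⟩ := ARVertex.nonempty_iso_of_mk_eq (ARVertex.mk_rep (ARVertex.mk X)).symm
  obtain ⟨β⟩ := ARVertex.nonempty_iso_of_mk_eq (ARVertex.mk_rep (ARVertex.mk Y)).symm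
  exact ⟨_, ((ModA.isIrred_iff f).1 hf).conj_iso α β⟩

lemma ARArrow.precedes {x y : ARVertex R} (h : ARArrow x y) : x.Precedes y := by
  obtain ⟨f, hf⟩ := h.exists_isIrreducibleHom
  rw [← x.mk_rep, ← y.mk_rep]
  exact ARVertex.precedes_of_ne_zero hf.ne_zero

lemma ARVertex.precedes_of_reflTransGen {x y : ARVertex R} (h : ReflTransGen ARArrow x y) :
    x.Precedes y := reflTransGen_closed (fun _ _ ↦ ARArrow.precedes) x y h

end VertexPaths

section CyclicComponents

open CategoryTheory Limits Relation

variable {R : Type u} [Ring R]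

lemma exists_multiplicativeClosure_of_transGen (P : ObjectProperty (ModA R)) {x y : ARVertex R}
    (h : TransGen ARArrow x y)
    (hP : ∀ z, ReflTransGen ARArrow x z → ReflTransGen ARArrow z y → P z.rep.1) :
    ∃ φ : x.rep.1 ⟶ y.rep.1, (irreducibleHomsIn P).multiplicativeClosure φ ∧ ¬IsSplitMono φ := by
  induction h with
  | single hxy =>
    obtain ⟨f, hf⟩ := hxy.exists_isIrreducibleHom
    exact ⟨f, .of f ⟨hf, hP _ .refl (.single hxy), hP _ (.single hxy) .refl⟩, hf.not_isSplitMono⟩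
  | @tail y z hxy hyz ih =>
    obtain ⟨φ, hφ, hφ'⟩ := ih fun w hxw hwy ↦ hP w hxw (hwy.tail hyz)
    obtain ⟨g, hg⟩ := hyz.exists_isIrreducibleHom
    have hxy' := hxy.to_reflTransGen
    refine ⟨φ ≫ g, .comp_of φ g hφ ⟨hg, hP y hxy' (.single hyz), hP z (hxy'.tail hyz) .refl⟩,
      fun _ ↦ hφ' (.mk' ⟨g ≫ retraction (φ ≫ g), ?_⟩)⟩
    rw [← Category.assoc, IsSplitMono.id]

namespace ARVertex

/-- The successors of `y` in `ind R`, as a class of modules. -/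
def successors (y : ARVertex R) : ObjectProperty (ModA R) :=
  fun Z ↦ ∃ hZ : Z.IsIndec, y.Precedes (mk ⟨Z, hZ⟩)

variable {x y z : ARVertex R}

lemma leftOrthogonal_successors (h : y.Precedes z) :
    y.successors.rightOrthogonal.leftOrthogonal z.rep.1 :=
  fun _ f hZ ↦ hZ f ⟨z.rep.2, by rw [← z.mk_rep] at h; exact h⟩

lemma rightOrthogonal_successors (h : ¬y.Precedes z) : y.successors.rightOrthogonal z.rep.1 := by
  rintro Z f ⟨hZ, hyZ⟩
  by_contra hf
  refine h (hyZ.trans ?_)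
  rw [← z.mk_rep]
  exact precedes_of_ne_zero (X := ⟨Z, hZ⟩) hf

lemma isSplitTorsionPair_successors (y : ARVertex R) :
    IsSplitTorsionPair y.successors.rightOrthogonal.leftOrthogonal
      y.successors.rightOrthogonal where
  eq_leftOrthogonal := rfl
  eq_rightOrthogonal := le_antisymm (fun _ hW _ f hZ ↦ hZ f hW)
    fun _ hW _ f hZ ↦ hW f fun _ g hV ↦ hV g hZ
  id_mem_closure W := by
    refine AddSubgroup.closure_mono ?_ (ModA.id_mem_closure_isIndec W)
    rintro _ ⟨V, ρ, hV, rfl⟩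
    refine ⟨V, ρ, or_iff_not_imp_right.2 fun hVF ↦ ?_, rfl⟩
    simp only [ObjectProperty.rightOrthogonal_iff, not_forall] at hVF
    obtain ⟨Z, f, ⟨hZ, hyZ⟩, hf⟩ := hVF
    have hyV : y.Precedes (mk ⟨V, hV⟩) :=
      hyZ.trans (precedes_of_ne_zero (X := ⟨Z, hZ⟩) (Y := ⟨V, hV⟩) hf)
    exact fun N g hN ↦ hN g ⟨hV, hyV⟩

end ARVertex

lemma ARArrow.precedes_of_onARCycle {x y : ARVertex R} (h : ARArrow x y) (hx : OnARCycle x)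
    (hy : OnARCycle y) : y.Precedes x := by
  by_contra hyx
  obtain ⟨f, hf⟩ := h.exists_isIrreducibleHom
  have hF {z : ARVertex R} (hzx : ReflTransGen ARArrow z x) :
      y.successors.rightOrthogonal z.rep.1 :=
    ARVertex.rightOrthogonal_successors fun hyz ↦
      hyx (hyz.trans (ARVertex.precedes_of_reflTransGen hzx))
  have hT {z : ARVertex R} (hyz : ReflTransGen ARArrow y z) :
      y.successors.rightOrthogonal.leftOrthogonal z.rep.1 :=
    ARVertex.leftOrthogonal_successors (ARVertex.precedes_of_reflTransGen hyz)
  obtain ⟨φ, hφ, hφ'⟩ := exists_multiplicativeClosure_of_transGen _ hx fun _ _ ↦ hF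
  obtain ⟨ψ, hψ, hψ'⟩ := exists_multiplicativeClosure_of_transGen _ hy fun _ h _ ↦ hT h
  rcases hf.not_isNilpotent_or_not_isNilpotent y.isSplitTorsionPair_successors (hF .refl)
    (hT .refl) hφ hψ with h | h
  · exact h (x.rep.2.isNilpotent_of_not_isIso fun _ ↦ hφ' inferInstance)
  · exact h (y.rep.2.isNilpotent_of_not_isIso fun _ ↦ hψ' inferInstance)

lemma IsCyclicComponent.precedes {Γ : Set (ARVertex R)} (hΓ : IsCyclicComponent Γ)
    {x y : ARVertex R} (hx : x ∈ Γ) (hy : y ∈ Γ) : x.Precedes y := by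
  refine reflTransGen_closed ?_ x y (hΓ.2.2.2 x hx y hy)
  rintro a b ⟨ha, hb, h | h⟩
  · exact h.precedes
  · exact h.precedes_of_onARCycle hb ha

end CyclicComponents

section CycleFinite

open CategoryTheory Limits Relation

variable {R : Type u} [Ring R]

lemma reflTransGen_of_notMem_radPow {X Y : IndecModA R} {n : ℕ} {f : X.1 ⟶ Y.1}
    (hf : f ∈ radPow R n X.1 Y.1) (hf' : f ∉ radPow R (n + 1) X.1 Y.1) :
    ReflTransGen ARArrow (ARVertex.mk X) (ARVertex.mk Y) := by
  induction n generalizing X with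
  | zero =>
    have hrad : ¬InRad f := fun h ↦ hf' <| by
      rw [← Category.comp_id f]
      exact comp_mem_radPow_succ h (AddSubgroup.mem_top _)
    rw [ARVertex.mk_eq_of_isIso f
      (Y.2.isIso_of_isSplitMono X.2.not_isZero (X.2.isSplitMono_of_not_inRad hrad))]
  | succ n ih =>
    obtain ⟨Z, g, h, hZ, hg, hh, hh'⟩ := exists_isIrreducibleHom_of_mem_radPow X.2 hf hf'
    exact .head ⟨X, ⟨Z, hZ⟩, g, (ModA.isIrred_iff g).2 hg, rfl, rfl⟩ (ih hh hh')

lemma reflTransGen_of_not_inRadInf {X Y : IndecModA R} {f : X.1 ⟶ Y.1} (hf : ¬InRadInf f) :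
    ReflTransGen ARArrow (ARVertex.mk X) (ARVertex.mk Y) := by
  by_contra h
  refine hf fun n ↦ ?_
  induction n with
  | zero => exact AddSubgroup.mem_top _
  | succ n ih => exact of_not_not fun hn ↦ h (reflTransGen_of_notMem_radPow ih hn)

lemma exists_relSeries_mem {α : Type*} {r : α → α → Prop} {a b c : α} (hab : ReflTransGen r a b)
    (hbc : ReflTransGen r b c) :
    ∃ s : RelSeries {(x, y) | r x y}, s.head = a ∧ s.last = c ∧ b ∈ s := by
  induction hbc with
  | refl =>
    induction hab with
    | refl => exact ⟨.singleton _ a, rfl, rfl, 0, rfl⟩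
    | tail _ hr ih =>
      obtain ⟨s, rfl, rfl, -⟩ := ih
      exact ⟨s.snoc _ hr, s.head_snoc _ hr, s.last_snoc _ hr, RelSeries.mem_snoc.2 (.inr rfl)⟩
  | tail _ hr ih =>
    obtain ⟨s, rfl, rfl, hs⟩ := ih
    exact ⟨s.snoc _ hr, s.head_snoc _ hr, s.last_snoc _ hr, RelSeries.mem_snoc.2 (.inl hs)⟩

lemma IsCycleFiniteVertex.not_inRadInf {v x y : ARVertex R} (hv : IsCycleFiniteVertex v)
    (hvx : v.Precedes x) (hyv : y.Precedes v) {k : x.rep.1 ⟶ y.rep.1} (hk : k ≠ 0)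
    (hk' : ¬IsIso k) : ¬InRadInf k := by
  obtain ⟨M, rfl, -, hM⟩ := hv
  obtain ⟨s, rfl, rfl, i, hi⟩ := exists_relSeries_mem hyv hvx
  choose g hg hg' using s.step
  let c : ModCycle R :=
    { len := s.length + 1
      len_pos := s.length.succ_pos
      obj := Fin.cons s.last.rep.1 fun i ↦ (s i).rep.1
      obj_indec := Fin.cases s.last.rep.2 fun i ↦ (s i).rep.2
      closed := rfl
      hom := Fin.cases k g
      hom_ne_zero := Fin.cases hk hg
      hom_not_iso := Fin.cases ((ModA.isIso_iff_bijective _).not.1 hk')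
        fun i ↦ (ModA.isIso_iff_bijective _).not.1 (hg' i) }
  have hc : c.Passes M.1 := ⟨i.succ, Quotient.exact (s := isoSetoid R) ((s i).mk_rep.trans hi)⟩
  exact hM c hc 0

lemma IsCycleFiniteVertex.reflTransGen_arArrow {v x y : ARVertex R} (hv : IsCycleFiniteVertex v)
    (hvx : v.Precedes x) (hxy : x.Precedes y) (hyv : y.Precedes v) :
    ReflTransGen ARArrow x y := by
  induction hxy with
  | refl => exact .refl
  | @tail y z hxy hyz ih =>
    have ⟨k, hk, hk'⟩ := hyz
    refine (ih (.head hyz hyv)).trans ?_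
    rw [← y.mk_rep, ← z.mk_rep]
    exact reflTransGen_of_not_inRadInf (hv.not_inRadInf (hvx.trans hxy) hyv hk hk')

lemma IsCyclicComponent.mem_of_reflTransGen {Γ : Set (ARVertex R)} (hΓ : IsCyclicComponent Γ)
    {x y : ARVertex R} (hx : x ∈ Γ) (hxy : ReflTransGen ARArrow x y)
    (hyx : ReflTransGen ARArrow y x) : y ∈ Γ := by
  induction hxy with
  | refl => exact hx
  | tail hxy h ih =>
    exact hΓ.2.2.1 _ (ih (.head h hyx)) _ (.tail' (hyx.trans hxy) h) (.inl h)

lemma IsCyclicComponent.mem_of_precedes {Γ : Set (ARVertex R)} (hΓ : IsCyclicComponent Γ)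
    {v x : ARVertex R} (hv : v ∈ Γ) (hv' : IsCycleFiniteVertex v) (hvx : v.Precedes x)
    (hxv : x.Precedes v) : x ∈ Γ :=
  hΓ.mem_of_reflTransGen hv (hv'.reflTransGen_arArrow .refl hvx hxv)
    (hv'.reflTransGen_arArrow hvx hxv .refl)

end CycleFinite

section Sincere

open CategoryTheory Limits

variable {R : Type u} [Ring R] {U : Set (ARVertex R)}

lemma SincereSet.exists_precedes_of_projective (hU : SincereSet U) {P : IndecModA R}
    (hP : Module.Projective R P.1.M) : ∃ x ∈ U, (ARVertex.mk P).Precedes x := by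
  have := P.2.1
  obtain ⟨N, hN⟩ := IsCoatomic.exists_coatom (Submodule R P.1.M)
  have := isSimpleModule_iff_isCoatom.2 hN
  obtain ⟨x, hx, X, rfl, L', L, -, ⟨e⟩⟩ := hU (P.1.M ⧸ N) this
  obtain ⟨k, hk⟩ := Module.projective_lifting_property
    (e.toLinearMap ∘ₗ (L'.comap L.subtype).mkQ) N.mkQ
    (e.surjective.comp (Submodule.mkQ_surjective _))
  refine ⟨_, hx, ARVertex.precedes_of_ne_zero (X := P) (Y := X) (f := L.subtype ∘ₗ k) fun h ↦ ?_⟩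
  have hk₀ : k = 0 := LinearMap.ext fun y ↦ Subtype.ext (LinearMap.congr_fun h y)
  rw [hk₀, LinearMap.comp_zero] at hk
  exact hN.1 (by rw [← N.ker_mkQ, ← hk, LinearMap.ker_zero])

lemma SincereSet.exists_precedes_of_injective (hU : SincereSet U) {I : IndecModA R}
    (hI : Module.Injective R I.1.M) : ∃ x ∈ U, x.Precedes (ARVertex.mk I) := by
  have := I.2.1
  obtain ⟨N, hN⟩ := IsAtomic.exists_atom (Submodule R I.1.M)
  have := isSimpleModule_iff_isAtom.2 hN
  obtain ⟨x, hx, X, rfl, L', L, -, ⟨e⟩⟩ := hU N this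
  let p : L →ₗ[R] N := e.toLinearMap ∘ₗ (L'.comap L.subtype).mkQ
  have hp : Function.Surjective p := e.surjective.comp (Submodule.mkQ_surjective _)
  obtain ⟨k, hk⟩ := hI.out L.subtype L.injective_subtype (N.subtype ∘ₗ p)
  refine ⟨_, hx, ARVertex.precedes_of_ne_zero (X := X) (Y := I) (f := k) fun h ↦ hN.1 ?_⟩
  have hp₀ : N.subtype ∘ₗ p = 0 := LinearMap.ext fun l ↦ by rw [← hk l, h]; rfl
  rw [← N.range_subtype, ← LinearMap.range_comp_of_range_eq_top _ (LinearMap.range_eq_top.2 hp),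
    hp₀, LinearMap.range_zero]

end Sincere

theorem path_from_injective_to_projective_in_core_general {R : Type u} [Ring R]
    (Γ : Set (ARVertex R)) (hΓ : IsCycleFiniteCyclicComponent Γ) (hsincere : SincereSet Γ)
    (m : ℕ) (X : Fin (m + 1) → ModA R) (hind : ∀ i, (X i).IsIndec)
    (f : ∀ i : Fin m, (X i.castSucc).M →ₗ[R] (X i.succ).M) (hne : ∀ i, f i ≠ 0)
    (hinj : Module.Injective R (X 0).M) (hproj : Module.Projective R (X (Fin.last m)).M) :
    ∀ i, ARVertex.mk ⟨X i, hind i⟩ ∈ Γ := by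
  obtain ⟨hΓ, v, hv, hv'⟩ := hΓ
  let x (i) : ARVertex R := .mk ⟨X i, hind i⟩
  obtain ⟨y, hy, hyx⟩ : ∃ y ∈ Γ, y.Precedes (x 0) := hsincere.exists_precedes_of_injective hinj
  obtain ⟨z, hz, hxz⟩ : ∃ z ∈ Γ, (x (Fin.last m)).Precedes z :=
    hsincere.exists_precedes_of_projective hproj
  have hstep (i : Fin m) : (x i.castSucc).Precedes (x i.succ) :=
    ARVertex.precedes_of_ne_zero (hne i)
  have hvx (i) : v.Precedes (x i) :=
    i.induction ((hΓ.precedes hv hy).trans hyx) fun i hi ↦ hi.trans (hstep i)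
  have hxv (i) : (x i).Precedes v :=
    i.reverseInduction (hxz.trans (hΓ.precedes hz hv)) fun i hi ↦ (hstep i).trans hi
  exact fun i ↦ hΓ.mem_of_precedes hv hv' (hvx i) (hxv i)

/-- **Key step in the proof of Theorem 2.** Let `B` be a basic indecomposable artin
algebra and `Γ` a sincere cycle-finite finite connected component of `_cΓ_B`. Then for
every path `I = X₀ → X₁ → ⋯ → X_m = P` of nonzero nonisomorphisms in `ind B` from an
indecomposable injective module `I` to an indecomposable projective module `P`, all the
modules `X₀, …, X_m` belong to `Γ`. -/
theorem path_from_injective_to_projective_in_core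
    (K B : Type u) [CommRing K] [IsArtinianRing K] [Ring B] [Algebra K B]
    [Module.Finite K B] (hbasic : IsBasicAlgebra B) (hconn : IsConnectedAlgebra B)
    (Γ : Set (ARVertex Bᵐᵒᵖ)) (hΓ : IsCycleFiniteCyclicComponent Γ) (hfin : Γ.Finite)
    (hsincere : SincereSet Γ)
    (m : ℕ) (hm : 0 < m) (X : Fin (m + 1) → ModA Bᵐᵒᵖ) (hind : ∀ i, (X i).IsIndec)
    (f : ∀ i : Fin m, (X i.castSucc).M →ₗ[Bᵐᵒᵖ] (X i.succ).M)
    (hne : ∀ i, f i ≠ 0) (hni : ∀ i, ¬Function.Bijective (f i))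
    (hinj : Module.Injective Bᵐᵒᵖ (X 0).M)
    (hproj : Module.Projective Bᵐᵒᵖ (X (Fin.last m)).M) :
    ∀ i, ARVertex.mk ⟨X i, hind i⟩ ∈ Γ :=
  path_from_injective_to_projective_in_core_general Γ hΓ hsincere m X hind f hne hinj hproj
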